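/- arXiv:2012.15319 — 3 statements merged into one kernel-verified Lean document; each statement's English description precedes it below -/
import Mathlib

section
/- Let p and ℓ be odd primes and q = p^e a power of p with q ≡ 1 (mod ℓ). For a nonzero polynomial f ∈ 𝔽_q[t], let ω(f) denote the number of distinct monic irreducible factors of f. Then there exists a real constant c > 0 such that the quantity (∑_{f} (ℓ−1)^{ω(f)}) / (q^d · d^{ℓ−2}), where the sum ranges over all monic squarefree polynomials f ∈ 𝔽_q[t] of degree d, tends to c as d → ∞. -/
open Polynomial Filter

lemma aux_summable (γ ε : ℕ → ℝ) (hε : Summable fun n => |ε n|)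
    (h : ∀ n : ℕ, (n : ℝ) * γ n = ∑ x ∈ Finset.HasAntidiagonal.antidiagonal n, ε x.1 * γ x.2) :
    Summable fun n => |γ n| := by
  set E := ∑' n, |ε n| with hE
  have hE0 : 0 ≤ E := tsum_nonneg fun _ => abs_nonneg _
  have key : ∀ N : ℕ, ∑ n ∈ Finset.range N, (n : ℝ) * |γ n| ≤ E * ∑ n ∈ Finset.range N, |γ n| := by
    intro N
    have h1 : ∀ n ∈ Finset.range N, (n : ℝ) * |γ n| ≤
        ∑ x ∈ (Finset.range N ×ˢ Finset.range N) with x.1 + x.2 = n, |ε x.1| * |γ x.2| := by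
      intro n hn
      rw [Finset.mem_range] at hn
      have : (n : ℝ) * |γ n| = |(n : ℝ) * γ n| := by rw [abs_mul, Nat.abs_cast]
      rw [this, h n]
      refine (Finset.abs_sum_le_sum_abs _ _).trans ?_
      simp_rw [abs_mul]
      refine Finset.sum_le_sum_of_subset_of_nonneg ?_ (fun _ _ _ => by positivity)
      intro x hx
      simp at hx ⊢
      omega
    refine (Finset.sum_le_sum h1).trans ?_
    refine (Finset.sum_fiberwise_le_sum_of_sum_fiber_nonneg
      (fun _ _ => Finset.sum_nonneg fun _ _ => by positivity)).trans ?_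
    rw [Finset.sum_product]
    dsimp only
    rw [← Finset.sum_mul_sum]
    gcongr
    exact hε.sum_le_tsum _ (fun _ _ => abs_nonneg _)
  obtain ⟨M, hM⟩ := exists_nat_ge (2 * E + 1)
  have hM0 : (0 : ℝ) < M := by linarith
  refine summable_of_sum_range_le (c := 2 * ∑ n ∈ Finset.range M, |γ n|) (fun _ => abs_nonneg _) ?_
  intro N
  have h2 : (M : ℝ) * ∑ n ∈ Finset.range N, |γ n| ≤
      M * ∑ n ∈ Finset.range M, |γ n| + ∑ n ∈ Finset.range N, (n : ℝ) * |γ n| := by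
    have : ∀ n ∈ Finset.range N, (M : ℝ) * |γ n| ≤
        (if n < M then M * |γ n| else 0) + n * |γ n| := by
      intro n _
      split_ifs with hh
      · have : 0 ≤ (n : ℝ) * |γ n| := by positivity
        linarith
      · push Not at hh
        have : (M : ℝ) ≤ n := by exact_mod_cast hh
        rw [zero_add]
        gcongr
    rw [Finset.mul_sum, Finset.mul_sum]
    refine (Finset.sum_le_sum this).trans ?_
    rw [Finset.sum_add_distrib]
    gcongr
    rw [← Finset.sum_filter]
    refine Finset.sum_le_sum_of_subset_of_nonneg ?_ (fun _ _ _ => by positivity)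
    intro x hx
    simp at hx ⊢
    exact hx.2
  have h3 := key N
  have h4 : 0 ≤ ∑ n ∈ Finset.range N, |γ n| := Finset.sum_nonneg fun _ _ => abs_nonneg _
  have h5 : E * ∑ n ∈ Finset.range N, |γ n| ≤ (M / 2) * ∑ n ∈ Finset.range N, |γ n| := by
    gcongr; linarith
  have h6 : (M : ℝ) * ∑ n ∈ Finset.range N, |γ n| ≤ M * (2 * ∑ n ∈ Finset.range M, |γ n|) := by
    linarith
  exact le_of_mul_le_mul_left h6 hM0

open PowerSeries in
lemma aux_coeff_ode (F K : PowerSeries ℝ) (h : PowerSeries.X * d⁄dX ℝ F = K * F) (n : ℕ) :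
    (n : ℝ) * coeff n F = ∑ x ∈ Finset.HasAntidiagonal.antidiagonal n, coeff x.1 K * coeff x.2 F := by
  rw [← PowerSeries.coeff_mul, ← h]
  cases n with
  | zero => simp
  | succ n => rw [PowerSeries.coeff_succ_X_mul, PowerSeries.coeff_derivative]; push_cast; ring

open PowerSeries in
lemma aux_ode_coeff (F K : PowerSeries ℝ) (h : ∀ n : ℕ, 
    (n : ℝ) * coeff n F = ∑ x ∈ Finset.HasAntidiagonal.antidiagonal n, coeff x.1 K * coeff x.2 F) :
     PowerSeries.X * d⁄dX ℝ F = K * F := by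
  ext n
  rw [PowerSeries.coeff_mul n K F, ← h]
  cases n with
  | zero => simp
  | succ n => rw [PowerSeries.coeff_succ_X_mul, PowerSeries.coeff_derivative]; push_cast; ring

lemma aux_choose_tendsto (r k : ℕ) :
    Tendsto (fun n : ℕ => if k ≤ n then ((n - k + r).choose r : ℝ) / (n : ℝ) ^ r else 0) atTop
      (nhds (1 / (r.factorial : ℝ))) := by
  have h1 : Tendsto (fun N : ℕ => (N.choose r : ℝ) / (N : ℝ) ^ r) atTop
      (nhds (1 / (r.factorial : ℝ))) := by
    have := ProbabilityTheory.tendsto_choose_mul_pow_atTop (p := fun n : ℕ => 1 / (n : ℝ)) (r := 1) r ?_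
    · simpa [div_eq_mul_inv] using this
    · refine tendsto_const_nhds.congr' ?_
      filter_upwards [eventually_gt_atTop 0] with n hn
      field_simp
  have h2 : Tendsto (fun n : ℕ => n - k + r) atTop atTop :=
    tendsto_atTop_mono (fun n => Nat.le_add_right _ _) (tendsto_sub_atTop_nat k)
  have h3 : Tendsto (fun n : ℕ => ((n - k + r : ℕ) : ℝ) / n) atTop (nhds 1) := by
    have : Tendsto (fun n : ℕ => 1 + ((r : ℝ) - k) * (n : ℝ)⁻¹) atTop (nhds (1 + ((r : ℝ) - k) * 0)) :=
      (tendsto_inv_atTop_nhds_zero_nat.const_mul _).const_add _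
    simp only [mul_zero, add_zero] at this
    refine this.congr' ?_
    filter_upwards [eventually_gt_atTop 0, eventually_ge_atTop k] with n hn hk
    push_cast [Nat.cast_sub hk]
    field_simp
    ring
  have h4 := (h1.comp h2).mul (h3.pow r)
  simp only [one_pow, mul_one] at h4
  refine h4.congr' ?_
  filter_upwards [eventually_gt_atTop 0, eventually_gt_atTop k] with n hn hk
  rw [if_pos hk.le]
  have : ((n - k + r : ℕ) : ℝ) ≠ 0 := by
    have : n - k + r ≠ 0 := by omega
    exact_mod_cast this
  simp only [Function.comp]
  rw [div_pow]
  field_simp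

lemma aux_choose_le (r k n : ℕ) (hn : 0 < n) :
    |(if k ≤ n then ((n - k + r).choose r : ℝ) / (n : ℝ) ^ r else 0)| ≤ (r + 1 : ℝ) ^ r := by
  split_ifs
  · rw [abs_of_nonneg (by positivity), div_le_iff₀ (by positivity), ← mul_pow]
    have h1 : (n - k + r).choose r ≤ ((r + 1) * n) ^ r := by
      refine (Nat.choose_le_pow _ _).trans ?_
      apply Nat.pow_le_pow_left
      have := Nat.le_mul_of_pos_right r hn
      have := Nat.sub_le n k
      nlinarith
    exact_mod_cast h1
  · simp; positivity

open PowerSeries in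
lemma aux_main (r : ℕ) (α ε : ℕ → ℝ) (h0 : α 0 = 1) (hα : ∀ n, 0 ≤ α n)
    (hε : Summable fun n => |ε n|)
    (h : ∀ n : ℕ, (n : ℝ) * α n = ∑ x ∈ Finset.HasAntidiagonal.antidiagonal n,
      ((if x.1 = 0 then 0 else (r + 1 : ℝ)) + ε x.1) * α x.2) :
    ∃ c : ℝ, 0 < c ∧ Tendsto (fun n : ℕ => α n / (n : ℝ) ^ r) atTop (nhds c) := by
  set A : PowerSeries ℝ := PowerSeries.mk α with hA
  set E : PowerSeries ℝ := PowerSeries.mk ε with hE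
  set Z : PowerSeries ℝ := PowerSeries.mk 1 with hZ
  have hZ1 : Z * (1 - PowerSeries.X) = 1 := PowerSeries.mk_one_mul_one_sub_eq_one ℝ
  have hAode : PowerSeries.X * d⁄dX ℝ A = ((r + 1 : ℝ⟦X⟧) * (PowerSeries.X * Z) + E) * A := by
    apply aux_ode_coeff
    intro n
    simp only [hA, PowerSeries.coeff_mk, h n]
    refine Finset.sum_congr rfl fun x _ => ?_
    congr 1
    have : (r + 1 : ℝ⟦X⟧) = PowerSeries.C (r + 1 : ℝ) := by simp
    rw [map_add, this, PowerSeries.coeff_C_mul, hE, PowerSeries.coeff_mk]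
    congr 1
    rcases x with ⟨_ | i, j⟩
    · simp
    · simp [PowerSeries.coeff_succ_X_mul, hZ]
  set G : PowerSeries ℝ := A * (1 - PowerSeries.X) ^ (r + 1) with hG
  have hGode : PowerSeries.X * d⁄dX ℝ G = E * G := by
    have h1 : d⁄dX ℝ ((1 - PowerSeries.X : ℝ⟦X⟧) ^ (r + 1)) = 
        - (r + 1 : ℝ⟦X⟧) * (1 - PowerSeries.X) ^ r := by
      rw [Derivation.leibniz_pow]
      simp
      ring
    rw [hG, Derivation.leibniz, h1]
    simp only [smul_eq_mul]
    linear_combination ((1 - PowerSeries.X) ^ (r + 1)) * hAode + (r + 1 : ℝ⟦X⟧) * PowerSeries.X * A * (1 - PowerSeries.X) ^ r * hZ1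
  have hG0 : constantCoeff G = 1 := by
    simp [hG, hA, h0]
  have hG0' : constantCoeff G ≠ 0 := by rw [hG0]; exact one_ne_zero
  set H : PowerSeries ℝ := G⁻¹ with hH
  have hGH : G * H = 1 := PowerSeries.mul_inv_cancel _ hG0'
  have hHode : PowerSeries.X * d⁄dX ℝ H = (-E) * H := by
    have := congrArg (d⁄dX ℝ) hGH
    rw [Derivation.leibniz] at this
    simp only [smul_eq_mul, Derivation.map_one_eq_zero] at this
    linear_combination PowerSeries.X * H * this - H * H * hGode - (PowerSeries.X * d⁄dX ℝ H + E * H) * hGH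
  have sG : Summable fun n => |coeff n G| :=
    aux_summable _ ε hε (by simpa [hE] using aux_coeff_ode G E hGode)
  have sH : Summable fun n => |coeff n H| :=
    aux_summable _ (fun n => - ε n) (by simpa using hε) (by simpa [hE] using aux_coeff_ode H _ hHode)
  set g := ∑' n, coeff n G with hg
  have hg0 : g ≠ 0 := by
    intro h0
    have := tsum_mul_tsum_eq_tsum_sum_antidiagonal_of_summable_norm (f := fun n => coeff n G)
      (g := fun n => coeff n H) sG sH
    simp_rw [← PowerSeries.coeff_mul, hGH, PowerSeries.coeff_one] at this
    rw [← hg, h0] at this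
    simp at this
  have hconv : ∀ n, α n = ∑' k, coeff k G * (if k ≤ n then ((n - k + r).choose r : ℝ) else 0) := by
    intro n
    have hAG : A = G * PowerSeries.mk (fun n => ((r + n).choose r : ℝ)) := by
      have := PowerSeries.mk_add_choose_mul_one_sub_pow_eq_one ℝ r
      rw [hG, mul_assoc, mul_comm (_ ^ _), this, mul_one]
    have h1 : α n = coeff n A := by simp [hA]
    rw [h1, hAG, PowerSeries.coeff_mul, Finset.Nat.sum_antidiagonal_eq_sum_range_succ_mk,
      tsum_eq_sum (s := Finset.range n.succ)]
    · refine Finset.sum_congr rfl fun k hk => ?_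
      rw [Finset.mem_range] at hk
      rw [if_pos (by omega), PowerSeries.coeff_mk, add_comm r]
    · intro k hk
      rw [Finset.mem_range] at hk
      rw [if_neg (by omega), mul_zero]
  have hlim : Tendsto (fun n : ℕ => α n / (n : ℝ) ^ r) atTop (nhds (g * (1 / (r.factorial : ℝ)))) := by
    have h1 : ∀ n : ℕ, α n / (n : ℝ) ^ r = ∑' k, coeff k G *
        (if k ≤ n then ((n - k + r).choose r : ℝ) / (n : ℝ) ^ r else 0) := by
      intro n
      rw [hconv, ← tsum_div_const]
      refine tsum_congr fun k => ?_
      split_ifs <;> ring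
    simp_rw [h1, hg, ← tsum_mul_right]
    refine tendsto_tsum_of_dominated_convergence (bound := fun k => |coeff k G| * (r + 1 : ℝ) ^ r)
      (sG.mul_right _) (fun k => (aux_choose_tendsto r k).const_mul _) ?_
    filter_upwards [eventually_gt_atTop 0] with n hn k
    rw [Real.norm_eq_abs, abs_mul]
    gcongr
    exact aux_choose_le r k n hn
  refine ⟨_, lt_of_le_of_ne ?_ ?_, hlim⟩
  · refine ge_of_tendsto' hlim fun n => ?_
    have := hα n
    positivity
  · have : (r.factorial : ℝ) ≠ 0 := by positivity
    exact (mul_ne_zero hg0 (by positivity)).symm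

lemma aux_div_summable (f g : ℕ → ℝ) (hf : Summable f) (hg : Summable g) (hf0 : ∀ n, 0 ≤ f n)
    (hg0 : ∀ n, 0 ≤ g n) : Summable fun k : ℕ => ∑ d ∈ k.divisors, f d * g (k / d) := by
  refine summable_of_sum_range_le (c := (∑' n, f n) * ∑' n, g n)
    (fun k => Finset.sum_nonneg fun d _ => mul_nonneg (hf0 _) (hg0 _)) ?_
  intro N
  have h1 : ∀ k ∈ Finset.range N, ∑ d ∈ k.divisors, f d * g (k / d) ≤
      ∑ x ∈ (Finset.range N ×ˢ Finset.range N) with x.1 * x.2 = k, f x.1 * g x.2 := by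
    intro k hk
    rw [Finset.mem_range] at hk
    rw [← Nat.sum_divisorsAntidiagonal (fun i j => f i * g j)]
    refine Finset.sum_le_sum_of_subset_of_nonneg ?_ (fun _ _ _ => mul_nonneg (hf0 _) (hg0 _))
    intro x hx
    rw [Nat.mem_divisorsAntidiagonal] at hx
    have h1 : x.1 ≠ 0 := by rintro h; simp [h] at hx; omega
    have h2 : x.2 ≠ 0 := by rintro h; simp [h] at hx; omega
    have := Nat.le_mul_of_pos_right x.1 (Nat.pos_of_ne_zero h2)
    have := Nat.le_mul_of_pos_left x.2 (Nat.pos_of_ne_zero h1)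
    simp
    omega
  refine (Finset.sum_le_sum h1).trans ?_
  refine (Finset.sum_fiberwise_le_sum_of_sum_fiber_nonneg
    (fun _ _ => Finset.sum_nonneg fun _ _ => mul_nonneg (hf0 _) (hg0 _))).trans ?_
  rw [Finset.sum_product]
  dsimp only
  rw [← Finset.sum_mul_sum]
  gcongr
  · exact Finset.sum_nonneg fun _ _ => hg0 _
  · exact tsum_nonneg hf0
  · exact hf.sum_le_tsum _ (fun _ _ => hf0 _)
  · exact hg.sum_le_tsum _ (fun _ _ => hg0 _)

/-- Error-term summability. -/
lemma aux_eps (D : ℕ → ℕ) (q m : ℕ) (hq : 2 ≤ q) (hm : 1 ≤ m) (hmq : m < q)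
    (hD : ∀ n, 0 < n → ∑ d ∈ n.divisors, D d = q ^ n) :
    Summable fun k : ℕ => |(∑ d ∈ k.divisors, (D d : ℝ) * (-(-(m : ℝ)) ^ (k / d))) / (q : ℝ) ^ k -
      (if k = 0 then 0 else (m : ℝ))| := by
  have hq0 : (0 : ℝ) < q := by exact_mod_cast (by omega : 0 < q)
  have hq1 : (1 : ℝ) ≤ q := by exact_mod_cast (by omega : 1 ≤ q)
  have hm1 : (1 : ℝ) ≤ m := by exact_mod_cast hm
  have hmq' : (m : ℝ) < q := by exact_mod_cast hmq
  have hs := (aux_div_summable (fun d => ((q : ℝ)⁻¹) ^ d) (fun j => ((m : ℝ) / q) ^ j)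
    (summable_geometric_of_lt_one (by positivity) (inv_lt_one_of_one_lt₀ (by exact_mod_cast (by omega : 1 < q))))
    (summable_geometric_of_lt_one (by positivity) (by rw [div_lt_one hq0]; exact hmq'))
    (fun _ => by positivity) (fun _ => by positivity)).mul_left (2 * (q : ℝ) ^ 2)
  refine Summable.of_nonneg_of_le (fun _ => abs_nonneg _) ?_ hs
  intro k
  rcases Nat.eq_zero_or_pos k with rfl | hk
  · simp
  rw [if_neg hk.ne']
  have hqk : (0 : ℝ) < (q : ℝ) ^ k := by positivity
  have e1 : (∑ d ∈ k.divisors, (D d : ℝ) * (-(-(m : ℝ)) ^ (k / d))) / (q : ℝ) ^ k - m =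
      ∑ d ∈ k.divisors, (D d : ℝ) * (-(-(m : ℝ)) ^ (k / d) - m) / (q : ℝ) ^ k := by
    have : (q : ℝ) ^ k = ∑ d ∈ k.divisors, (D d : ℝ) := by exact_mod_cast (hD k hk).symm
    rw [← Finset.sum_div, eq_div_iff hqk.ne', sub_mul, div_mul_cancel₀ _ hqk.ne']
    nth_rw 1 [this]
    rw [Finset.mul_sum, ← Finset.sum_sub_distrib]
    exact Finset.sum_congr rfl fun d _ => by ring
  rw [e1, Finset.mul_sum]
  refine (Finset.abs_sum_le_sum_abs _ _).trans (Finset.sum_le_sum fun d hd => ?_)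
  obtain ⟨j, rfl⟩ := Nat.dvd_of_mem_divisors hd
  have hd0 : 0 < d := Nat.pos_of_mul_pos_right hk
  have hj0 : 0 < j := Nat.pos_of_mul_pos_left hk
  rw [Nat.mul_div_cancel_left _ hd0]
  have hDd : (D d : ℝ) ≤ (q : ℝ) ^ d := by
    have := hD d hd0
    have h2 : D d ≤ ∑ x ∈ d.divisors, D x :=
      Finset.single_le_sum (f := D) (fun _ _ => Nat.zero_le _) (by simp; omega)
    rw [this] at h2
    exact_mod_cast h2
  rcases (by omega : j = 1 ∨ 2 ≤ j) with rfl | hj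
  · simp; positivity
  have h3 : |(-(-(m : ℝ)) ^ j - m)| ≤ 2 * (m : ℝ) ^ j := by
    refine (abs_sub _ _).trans ?_
    rw [abs_neg, abs_pow, abs_neg, Nat.abs_cast]
    have : (m : ℝ) ^ 1 ≤ (m : ℝ) ^ j := pow_le_pow_right₀ hm1 (by omega)
    linarith
  rw [abs_div, abs_mul, Nat.abs_cast, abs_of_pos hqk, div_le_iff₀ hqk]
  have h4 : (q : ℝ) ^ d ≤ (q : ℝ) ^ 2 * ((q : ℝ)⁻¹ ^ d * ((q : ℝ)⁻¹ ^ j)) * (q : ℝ) ^ (d * j) := by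
    have h5 : (q : ℝ) ^ (d + d + j) ≤ (q : ℝ) ^ (2 + d * j) := by
      apply pow_le_pow_right₀ hq1
      obtain ⟨a, rfl⟩ := Nat.exists_eq_add_of_le hd0
      obtain ⟨b, rfl⟩ := Nat.exists_eq_add_of_le hj
      simp
      nlinarith [Nat.zero_le (a * b)]
    rw [inv_pow, inv_pow]
    have : (q : ℝ) ^ 2 * (((q : ℝ) ^ d)⁻¹ * ((q : ℝ) ^ j)⁻¹) * (q : ℝ) ^ (d * j) =
      (q : ℝ) ^ (2 + d * j) / (q ^ d * q ^ j) := by rw [pow_add]; field_simp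
    rw [this, le_div_iff₀ (by positivity), ← pow_add, ← pow_add]
    refine le_trans (le_of_eq ?_) h5
    ring
  calc (D d : ℝ) * |(-(-(m : ℝ)) ^ j - m)| ≤ (q : ℝ) ^ d * (2 * (m : ℝ) ^ j) := by gcongr
    _ ≤ ((q : ℝ) ^ 2 * ((q : ℝ)⁻¹ ^ d * ((q : ℝ)⁻¹ ^ j)) * (q : ℝ) ^ (d * j)) * (2 * (m : ℝ) ^ j) := by
      gcongr
    _ = _ := by rw [div_eq_mul_inv (m : ℝ), mul_pow]; ring

open PowerSeries in
/-- Logarithmic derivative of `∏ (1 + m X^d)^{π d}`. -/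
lemma aux_logder (m : ℝ) (pi : ℕ → ℕ) (N : ℕ) :
    PowerSeries.X * d⁄dX ℝ (∏ d ∈ Finset.Icc 1 N, (1 + PowerSeries.C m * PowerSeries.X ^ d) ^ (pi d)) =
    (∑ d ∈ Finset.Icc 1 N, PowerSeries.C ((d * pi d : ℕ) : ℝ) *
      PowerSeries.mk (fun k => if k ≠ 0 ∧ d ∣ k then -(-m) ^ (k / d) else 0)) *
    (∏ d ∈ Finset.Icc 1 N, (1 + PowerSeries.C m * PowerSeries.X ^ d) ^ (pi d)) := by
  induction N with
  | zero => simp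
  | succ N ih =>
    rw [Finset.prod_Icc_succ_top (by omega), Finset.sum_Icc_succ_top (by omega), Derivation.leibniz]
    set F := ∏ d ∈ Finset.Icc 1 N, (1 + PowerSeries.C m * PowerSeries.X ^ d) ^ (pi d)
    set K := ∑ d ∈ Finset.Icc 1 N, PowerSeries.C ((d * pi d : ℕ) : ℝ) *
      PowerSeries.mk (fun k => if k ≠ 0 ∧ d ∣ k then -(-m) ^ (k / d) else 0)
    set d := N + 1 with hd
    set L : ℝ⟦X⟧ := PowerSeries.mk (fun k => if k ≠ 0 ∧ d ∣ k then -(-m) ^ (k / d) else 0) with hL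
    have hL1 : (1 + PowerSeries.C m * PowerSeries.X ^ d) * L = PowerSeries.C m * PowerSeries.X ^ d := by
      ext k
      rw [add_mul, one_mul, mul_assoc, map_add, PowerSeries.coeff_C_mul, PowerSeries.coeff_C_mul,
        PowerSeries.coeff_X_pow, PowerSeries.coeff_X_pow_mul', hL]
      simp only [PowerSeries.coeff_mk]
      by_cases hk : d ∣ k
      · obtain ⟨j, rfl⟩ := hk
        rcases j with _ | _ | j
        · simp [hd]
        · simp [hd]
        · have h1 : d * (j + 1 + 1) ≠ 0 := by positivity
          have h2 : d ≤ d * (j + 1 + 1) := Nat.le_mul_of_pos_right _ (by omega)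
          have h3 : d * (j + 1 + 1) - d = d * (j + 1) := by
            rw [mul_add d (j + 1) 1, mul_one, Nat.add_sub_cancel]
          have h4 : d * (j + 1) ≠ 0 := by positivity
          have h5 : d * (j + 1 + 1) ≠ d := by
            intro h
            have : d * (j + 1 + 1) = d * 1 := by omega
            have := Nat.eq_of_mul_eq_mul_left (by omega) this
            omega
          rw [if_pos ⟨h1, dvd_mul_right _ _⟩, if_pos h2, h3, if_pos ⟨h4, dvd_mul_right _ _⟩,
            if_neg h5, Nat.mul_div_cancel_left _ (by omega), Nat.mul_div_cancel_left _ (by omega)]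
          ring
      · have h1 : k ≠ d := by rintro rfl; exact hk dvd_rfl
        rw [if_neg (by tauto), if_neg h1]
        split_ifs with h2 h3
        · exact absurd ((Nat.dvd_sub_iff_left h2 dvd_rfl).1 h3.2) hk
        · simp
        · simp
    have hB : PowerSeries.X * d⁄dX ℝ ((1 + PowerSeries.C m * PowerSeries.X ^ d) ^ (pi d)) =
        PowerSeries.C ((d * pi d : ℕ) : ℝ) * L * ((1 + PowerSeries.C m * PowerSeries.X ^ d) ^ (pi d)) := by
      have h1 : PowerSeries.X * d⁄dX ℝ (1 + PowerSeries.C m * PowerSeries.X ^ d) =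
          (d : ℝ⟦X⟧) * (PowerSeries.C m * PowerSeries.X ^ d) := by
        rw [map_add, Derivation.leibniz, Derivation.leibniz_pow]
        simp [hd]
        ring
      rw [Derivation.leibniz_pow]
      rcases pi d with _ | e
      · simp
      · simp only [Nat.add_sub_cancel, smul_eq_mul, nsmul_eq_mul]
        have h2 : (PowerSeries.C ((d * (e + 1) : ℕ) : ℝ) : ℝ⟦X⟧) = (d : ℝ⟦X⟧) * ((e + 1 : ℕ) : ℝ⟦X⟧) := by
          simp
        rw [h2]
        linear_combination ((e + 1 : ℕ) : ℝ⟦X⟧) * (1 + PowerSeries.C m * PowerSeries.X ^ d) ^ e * h1 - ((e + 1 : ℕ) : ℝ⟦X⟧) * (d : ℝ⟦X⟧) * (1 + PowerSeries.C m * PowerSeries.X ^ d) ^ e * hL1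
    simp only [smul_eq_mul]
    linear_combination F * hB + (1 + PowerSeries.C m * PowerSeries.X ^ d) ^ (pi d) * ih
open UniqueFactorizationMonoid Classical in
/-- monic irreducible polynomials of degree `d` (as a finset) -/
noncomputable def auxIrr (F : Type) [Field F] [Fintype F] (d : ℕ) : Finset F[X] :=
  (normalizedFactors (X ^ (Fintype.card F) ^ d - X : F[X])).toFinset.filter fun P => P.natDegree = d

lemma aux_W_ne (F : Type) [Field F] [Fintype F] (d : ℕ) (hd : 0 < d) :
    (X ^ (Fintype.card F) ^ d - X : F[X]) ≠ 0 :=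
  FiniteField.X_pow_card_pow_sub_X_ne_zero F hd.ne' Fintype.one_lt_card

lemma aux_mem_irr (F : Type) [Field F] [Fintype F] (d : ℕ) (hd : 0 < d) (P : F[X]) :
    P ∈ auxIrr F d ↔ P.Monic ∧ Irreducible P ∧ P.natDegree = d := by
  classical
  unfold auxIrr
  simp only [Finset.mem_filter, Multiset.mem_toFinset]
  have h1 := Polynomial.mem_normalizedFactors_iff (p := P) (aux_W_ne F d hd)
  have h2 : P ∈ UniqueFactorizationMonoid.normalizedFactors (X ^ (Fintype.card F) ^ d - X : F[X]) ↔
    Irreducible P ∧ P.Monic ∧ P ∣ (X ^ (Fintype.card F) ^ d - X : F[X]) := by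
    convert h1
  rw [h2]
  constructor
  · tauto
  · rintro ⟨h3, h4, h5⟩
    refine ⟨⟨h4, h3, ?_⟩, h5⟩
    have := (Irreducible.natDegree_dvd_iff_dvd_X_pow_card_pow_sub_X h4 (n := d)).1 (by rw [h5])
    rwa [Nat.card_eq_fintype_card] at this

/-- A monic squarefree polynomial is the product of its monic irreducible divisors. -/
lemma aux_factor {F : Type} [Field F] (f : F[X]) (hf : f.Monic) (hs : Squarefree f) :
    ∃ T : Finset F[X], (∀ P, P ∈ T ↔ P.Monic ∧ Irreducible P ∧ P ∣ f) ∧ ∏ P ∈ T, P = f := by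
  classical
  refine ⟨(UniqueFactorizationMonoid.normalizedFactors f).toFinset, fun P => ?_, ?_⟩
  · rw [Multiset.mem_toFinset, Polynomial.mem_normalizedFactors_iff hf.ne_zero]
    tauto
  · have h1 := Polynomial.leadingCoeff_mul_prod_normalizedFactors f
    rw [hf.leadingCoeff, C_1, one_mul] at h1
    rw [Finset.prod_eq_multiset_prod, Multiset.toFinset_val,
      ((UniqueFactorizationMonoid.squarefree_iff_nodup_normalizedFactors hf.ne_zero).1 hs).dedup]
    simpa using h1

/-- A product of distinct monic irreducibles. -/
lemma aux_prod {F : Type} [Field F] (T : Finset F[X]) (hT : ∀ P ∈ T, P.Monic ∧ Irreducible P) :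
    (∏ P ∈ T, P).Monic ∧ Squarefree (∏ P ∈ T, P) ∧
    (∏ P ∈ T, P).natDegree = ∑ P ∈ T, P.natDegree ∧
    ∀ P, P ∈ T ↔ P.Monic ∧ Irreducible P ∧ P ∣ ∏ Q ∈ T, Q := by
  classical
  have hm : (∏ P ∈ T, P).Monic := monic_prod_of_monic _ _ fun P hP => (hT P hP).1
  have hnf : UniqueFactorizationMonoid.normalizedFactors (∏ P ∈ T, P) = T.val := by
    have h := UniqueFactorizationMonoid.normalizedFactors_prod_eq T.val (fun P hP => (hT P hP).2)
    have h2 : T.val.map normalize = T.val := by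
      conv_rhs => rw [← Multiset.map_id T.val]
      exact Multiset.map_congr rfl fun P hP => (hT P hP).1.normalize_eq_self
    rw [h2] at h
    rw [Finset.prod_eq_multiset_prod]
    simpa using h
  refine ⟨hm, ?_, natDegree_prod_of_monic _ _ fun P hP => (hT P hP).1, fun P => ?_⟩
  · rw [UniqueFactorizationMonoid.squarefree_iff_nodup_normalizedFactors hm.ne_zero, hnf]
    exact T.nodup
  · have := Polynomial.mem_normalizedFactors_iff (p := P) hm.ne_zero
    rw [hnf] at this
    rw [← Finset.mem_val, this]
    tauto

lemma aux_count (F : Type) [Field F] [Fintype F] (n : ℕ) (hn : 0 < n) :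
    ∑ d ∈ n.divisors, d * (auxIrr F d).card = Fintype.card F ^ n := by
  classical
  have hcard : 1 < Fintype.card F := Fintype.one_lt_card
  have hdeg : (X ^ (Fintype.card F) ^ n - X : F[X]).natDegree = Fintype.card F ^ n :=
    FiniteField.X_pow_card_pow_sub_X_natDegree_eq F hn.ne' hcard
  have hmon : (X ^ (Fintype.card F) ^ n - X : F[X]).Monic := by
    refine monic_X_pow_sub ?_
    rw [degree_X]
    exact_mod_cast Nat.one_lt_pow hn.ne' hcard
  have hsq : Squarefree (X ^ (Fintype.card F) ^ n - X : F[X]) := by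
    obtain ⟨p, hp⟩ := CharP.exists F
    refine (galois_poly_separable p _ ?_).squarefree
    refine dvd_pow ?_ hn.ne'
    rw [← CharP.cast_eq_zero_iff F p, Nat.cast_card_eq_zero]
  obtain ⟨T, hT, hprod⟩ := aux_factor _ hmon hsq
  have h1 := (aux_prod T fun P hP => ⟨((hT P).1 hP).1, ((hT P).1 hP).2.1⟩).2.2.1
  rw [hprod, hdeg] at h1
  rw [h1, ← Finset.sum_fiberwise_of_maps_to (s := T) (t := n.divisors) (g := fun P => P.natDegree)]
  · refine Finset.sum_congr rfl fun d hd => ?_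
    have hdn := Nat.dvd_of_mem_divisors hd
    have hd0 : 0 < d := Nat.pos_of_mem_divisors hd
    rw [Finset.sum_congr rfl (g := fun _ => d) (fun P hP => (Finset.mem_filter.1 hP).2),
      Finset.sum_const, smul_eq_mul, mul_comm]
    congr 2
    ext P
    rw [aux_mem_irr F d hd0, Finset.mem_filter, hT]
    constructor
    · rintro ⟨a, b, c⟩
      refine ⟨⟨a, b, ?_⟩, c⟩
      have := (Irreducible.natDegree_dvd_iff_dvd_X_pow_card_pow_sub_X b (n := n)).1 (by rw [c]; exact hdn)
      rwa [Nat.card_eq_fintype_card] at this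
    · tauto
  · intro P hP
    obtain ⟨a, b, c⟩ := (hT P).1 hP
    rw [Nat.mem_divisors]
    refine ⟨?_, hn.ne'⟩
    apply (Irreducible.natDegree_dvd_iff_dvd_X_pow_card_pow_sub_X b (n := n)).2
    rwa [Nat.card_eq_fintype_card]

lemma aux_coeff_prod (F : Type) [Field F] [Fintype F] (m : ℕ) (ω : F[X] → ℕ)
    (hω : ∀ f : F[X], f ≠ 0 →
      ω f = Nat.card {g : F[X] // g.Monic ∧ Irreducible g ∧ g ∣ f}) (N n : ℕ) (hn : n ≤ N) :
    PowerSeries.coeff n (∏ d ∈ Finset.Icc 1 N,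
      (1 + PowerSeries.C (m : ℝ) * PowerSeries.X ^ d) ^ (auxIrr F d).card) =
    ∑ᶠ f ∈ {f : F[X] | f.Monic ∧ Squarefree f ∧ f.natDegree = n}, ((m ^ ω f : ℕ) : ℝ) := by
  classical
  set S : Finset F[X] := (Finset.Icc 1 N).biUnion (auxIrr F) with hS
  have hSmem : ∀ P, P ∈ S ↔ P.Monic ∧ Irreducible P ∧ P.natDegree ≤ N := by
    intro P
    rw [hS, Finset.mem_biUnion]
    constructor
    · rintro ⟨d, hd, hP⟩
      rw [Finset.mem_Icc] at hd
      rw [aux_mem_irr F d (by omega)] at hP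
      exact ⟨hP.1, hP.2.1, by omega⟩
    · rintro ⟨a, b, c⟩
      have := b.natDegree_pos
      exact ⟨P.natDegree, Finset.mem_Icc.2 ⟨by omega, c⟩, (aux_mem_irr F _ this P).2 ⟨a, b, rfl⟩⟩
  have hprod : (∏ d ∈ Finset.Icc 1 N,
      (1 + PowerSeries.C (m : ℝ) * PowerSeries.X ^ d) ^ (auxIrr F d).card) =
      ∏ P ∈ S, (1 + PowerSeries.C (m : ℝ) * PowerSeries.X ^ P.natDegree) := by
    rw [hS, Finset.prod_biUnion]
    · refine Finset.prod_congr rfl fun d hd => ?_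
      rw [Finset.mem_Icc] at hd
      rw [← Finset.prod_const]
      refine Finset.prod_congr rfl fun P hP => ?_
      rw [((aux_mem_irr F d (by omega) P).1 hP).2.2]
    · intro d hd e he hde
      rw [Function.onFun, Finset.disjoint_left]
      intro P hP hP'
      simp at hd he
      rw [aux_mem_irr F d (by omega)] at hP
      rw [aux_mem_irr F e (by omega)] at hP'
      exact hde (hP.2.2.symm.trans hP'.2.2)
  have hcoef : ∀ T : Finset F[X], PowerSeries.coeff n
      (∏ P ∈ T, (PowerSeries.C (m : ℝ) * PowerSeries.X ^ P.natDegree)) =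
      if n = ∑ P ∈ T, P.natDegree then (m : ℝ) ^ T.card else 0 := by
    intro T
    rw [Finset.prod_mul_distrib, Finset.prod_const, Finset.prod_pow_eq_pow_sum, ← map_pow,
      PowerSeries.coeff_C_mul, PowerSeries.coeff_X_pow]
    simp
  rw [hprod, Finset.prod_one_add, map_sum]
  simp_rw [hcoef]
  rw [← Finset.sum_filter]
  have hTirr : ∀ T ∈ S.powerset, ∀ P ∈ T, P.Monic ∧ Irreducible P := by
    intro T hT P hP
    have := (hSmem P).1 (Finset.mem_powerset.1 hT hP)
    exact ⟨this.1, this.2.1⟩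
  have hset : {f : F[X] | f.Monic ∧ Squarefree f ∧ f.natDegree = n} =
      ((S.powerset.filter fun T => n = ∑ P ∈ T, P.natDegree).image fun T => ∏ P ∈ T, P : Finset F[X]) := by
    ext f
    simp only [Set.mem_ofPred_eq, Finset.coe_image, Set.mem_image, Finset.mem_coe, Finset.mem_filter]
    constructor
    · rintro ⟨h1, h2, h3⟩
      obtain ⟨T, hT, hp⟩ := aux_factor f h1 h2
      have h4 := aux_prod T fun P hP => ⟨((hT P).1 hP).1, ((hT P).1 hP).2.1⟩
      refine ⟨T, ⟨?_, ?_⟩, hp⟩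
      · rw [Finset.mem_powerset]
        intro P hP
        obtain ⟨a, b, c⟩ := (hT P).1 hP
        exact (hSmem P).2 ⟨a, b, (natDegree_le_of_dvd c h1.ne_zero).trans (by omega)⟩
      · rw [← h4.2.2.1, hp, h3]
    · rintro ⟨T, ⟨hT, hs⟩, rfl⟩
      have h4 := aux_prod T (hTirr T hT)
      exact ⟨h4.1, h4.2.1, h4.2.2.1.trans hs.symm⟩
  rw [hset, finsum_mem_coe_finset, Finset.sum_image]
  · refine Finset.sum_congr rfl fun T hT => ?_
    have h4 := aux_prod T (hTirr T (Finset.mem_filter.1 hT).1)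
    rw [hω _ h4.1.ne_zero, Nat.subtype_card T (fun P => h4.2.2.2 P)]
    push_cast
    rfl
  · intro T hT T' hT' h
    have h4 := aux_prod T (hTirr T (Finset.mem_filter.1 hT).1)
    have h5 := aux_prod T' (hTirr T' (Finset.mem_filter.1 hT').1)
    ext P
    rw [h4.2.2.2 P, h5.2.2.2 P]
    simp only at h
    rw [h]

theorem stmt_6 (p e q ℓ : ℕ) (hp : p.Prime) (hpodd : Odd p) (hℓ : ℓ.Prime) (hℓodd : Odd ℓ)
    (he : 0 < e) (hq : q = p ^ e) (hqℓ : q % ℓ = 1)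
    (Fq : Type) [Field Fq] [Fintype Fq] (hcard : Fintype.card Fq = q)
    (ω : Fq[X] → ℕ)
    (hω : ∀ f : Fq[X], f ≠ 0 →
      ω f = Nat.card {g : Fq[X] // g.Monic ∧ Irreducible g ∧ g ∣ f}) :
    ∃ c : ℝ, 0 < c ∧
      Tendsto
        (fun d : ℕ =>
          (∑ᶠ f ∈ {f : Fq[X] | f.Monic ∧ Squarefree f ∧ f.natDegree = d},
            (((ℓ - 1 : ℕ) ^ ω f : ℕ) : ℝ)) / ((q : ℝ) ^ d * (d : ℝ) ^ (ℓ - 2)))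
        atTop (nhds c) := by
  have hℓ2 := hℓ.two_le
  obtain ⟨m, hm⟩ : ∃ m, m = ℓ - 1 := ⟨_, rfl⟩
  have hq2 : 2 ≤ q := by rw [← hcard]; exact Fintype.one_lt_card
  have hmq : m < q := by
    by_contra hlt
    rw [Nat.mod_eq_of_lt (by omega)] at hqℓ
    omega
  rw [← hm]
  set a : ℕ → ℝ := fun n => ∑ᶠ f ∈ {f : Fq[X] | f.Monic ∧ Squarefree f ∧ f.natDegree = n},
    ((m ^ ω f : ℕ) : ℝ) with ha
  set b : ℕ → ℝ := fun k => ∑ d ∈ k.divisors, ((d * (auxIrr Fq d).card : ℕ) : ℝ) *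
    (-(-(m : ℝ)) ^ (k / d)) with hb
  have hrec : ∀ n : ℕ, (n : ℝ) * a n = ∑ x ∈ Finset.HasAntidiagonal.antidiagonal n, b x.1 * a x.2 := by
    intro n
    have h1 := aux_coeff_ode _ _ (aux_logder (m : ℝ) (fun d => (auxIrr Fq d).card) n) n
    rw [aux_coeff_prod Fq m ω hω n n le_rfl] at h1
    rw [ha]
    dsimp only
    rw [h1]
    refine Finset.sum_congr rfl fun x hx => ?_
    rw [Finset.HasAntidiagonal.mem_antidiagonal] at hx
    rw [aux_coeff_prod Fq m ω hω n x.2 (by omega)]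
    congr 1
    rw [hb, map_sum]
    simp only [PowerSeries.coeff_C_mul, PowerSeries.coeff_mk, mul_ite, mul_zero]
    rw [← Finset.sum_filter]
    refine Finset.sum_congr ?_ fun _ _ => rfl
    ext d
    rw [Finset.mem_filter, Finset.mem_Icc, Nat.mem_divisors]
    constructor
    · tauto
    · rintro ⟨h2, h3⟩
      have := Nat.le_of_dvd (Nat.pos_of_ne_zero h3) h2
      have := Nat.pos_of_dvd_of_pos h2 (Nat.pos_of_ne_zero h3)
      exact ⟨by omega, h3, h2⟩
  have hq0 : (q : ℝ) ≠ 0 := by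
    have : q ≠ 0 := by omega
    exact_mod_cast this
  have heps := aux_eps (fun d => d * (auxIrr Fq d).card) q m hq2 (by omega) hmq
    (fun n hn => by rw [aux_count Fq n hn, hcard])
  have g0 : a 0 / (q : ℝ) ^ 0 = 1 := by
    have := aux_coeff_prod Fq m ω hω 0 0 le_rfl
    simp only [ha]
    rw [← this]
    simp
  have g1 : ∀ n, 0 ≤ a n / (q : ℝ) ^ n := by
    intro n
    have : 0 ≤ a n := by
      rw [ha]
      refine finsum_nonneg fun f => finsum_nonneg fun _ => by positivity
    positivity
  obtain ⟨c, hc, hlim⟩ := aux_main (ℓ - 2) (fun n => a n / (q : ℝ) ^ n)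
    (fun k => b k / (q : ℝ) ^ k - (if k = 0 then 0 else (m : ℝ))) g0 g1 heps (by
      intro n
      rw [← mul_div_assoc, hrec n, Finset.sum_div]
      refine Finset.sum_congr rfl fun x hx => ?_
      rw [Finset.HasAntidiagonal.mem_antidiagonal] at hx
      have h1 : ((ℓ - 2 : ℕ) : ℝ) + 1 = m := by
        have : ℓ - 2 + 1 = m := by omega
        exact_mod_cast this
      rw [h1, add_sub_cancel, ← hx, pow_add]
      field_simp)
  refine ⟨c, hc, hlim.congr fun n => ?_⟩
  rw [div_div]
end

section
/- Let 𝔽_q be a finite field with q elements and let ℓ be a prime dividing q − 1. Let f ∈ 𝔽_q[t] be a nonzero polynomial with exactly r distinct monic irreducible factors. Then the number of group homomorphisms from (𝔽_q[t]/(f))ˣ to the cyclic group ℤ/ℓℤ equals ℓ^r. -/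
open Polynomial

/-- The number of homomorphisms from a finite cyclic group of order divisible by `ℓ`. -/
lemma card_hom_cyclic (ℓ : ℕ) (hℓ : ℓ.Prime) (G : Type) [CommGroup G] [Finite G] [IsCyclic G]
    (h : ℓ ∣ Nat.card G) : Nat.card (G →* Multiplicative (ZMod ℓ)) = ℓ := by
  obtain ⟨g, hg⟩ := IsCyclic.exists_generator (α := G)
  have hcard : Nat.card (Multiplicative (ZMod ℓ)) = ℓ := by
    rw [Nat.card_congr Multiplicative.toAdd, Nat.card_zmod]
  have hb : Function.Bijective (fun φ : G →* Multiplicative (ZMod ℓ) => φ g) := by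
    constructor
    · intro φ ψ hφ
      ext x
      obtain ⟨n, rfl⟩ := hg x
      simp only at hφ
      simp [hφ]
    · intro y
      have hy : orderOf y ∣ orderOf g := by
        rw [orderOf_eq_card_of_forall_mem_zpowers hg]
        exact ((orderOf_dvd_natCard y).trans (by rw [hcard])).trans h
      exact ⟨monoidHomOfForallMemZpowers hg hy, monoidHomOfForallMemZpowers_apply_gen hg hy⟩
  rw [Nat.card_eq_of_bijective _ hb, hcard]

/-- The number of homomorphisms from a finite product. -/
lemma card_hom_pi (ℓ : ℕ) (ι : Type) [Finite ι] (G : ι → Type) [∀ i, CommGroup (G i)]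
    (h : ∀ i, Nat.card (G i →* Multiplicative (ZMod ℓ)) = ℓ) :
    Nat.card ((∀ i, G i) →* Multiplicative (ZMod ℓ)) = ℓ ^ Nat.card ι := by
  classical
  have := Fintype.ofFinite ι
  have hc : ∀ ϕ : (∀ i, G i →* Multiplicative (ZMod ℓ)),
      Pairwise fun i j => ∀ (x : G i) (y : G j), Commute ((ϕ i) x) ((ϕ j) y) :=
    fun ϕ i j _ x y => mul_comm _ _
  rw [← Nat.card_congr (MonoidHom.noncommPiCoprodEquiv (N := G) (M := Multiplicative (ZMod ℓ))),
    Nat.card_congr (Equiv.subtypeUnivEquiv hc), Nat.card_pi]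
  simp [h]

lemma card_units_dvd (ℓ : ℕ) (Fq : Type) [Field Fq] [Fintype Fq]
    (hdvd : ℓ ∣ Fintype.card Fq - 1) (g : Fq[X]) (hg : Irreducible g) (hℓ : ℓ.Prime) :
    Nat.card ((Fq[X] ⧸ Ideal.span {g})ˣ →* Multiplicative (ZMod ℓ)) = ℓ := by
  have := Fact.mk hg
  have e : Nat.card ((AdjoinRoot g)ˣ →* Multiplicative (ZMod ℓ)) = ℓ := by
    have : Module.Finite Fq (AdjoinRoot g) := (AdjoinRoot.powerBasis hg.ne_zero).finite
    have : Finite (AdjoinRoot g) := Module.finite_of_finite Fq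
    apply card_hom_cyclic ℓ hℓ
    have h1 : Nat.card Fqˣ ∣ Nat.card (AdjoinRoot g)ˣ :=
      Subgroup.card_dvd_of_injective (Units.map (AdjoinRoot.of g : Fq →* AdjoinRoot g))
        (Units.map_injective (AdjoinRoot.of g).injective)
    refine dvd_trans ?_ h1
    rwa [Nat.card_units, Nat.card_eq_fintype_card]
  exact e

theorem stmt_8 (q ℓ : ℕ) (hℓ : ℓ.Prime) (hdvd : ℓ ∣ q - 1)
    (Fq : Type) [Field Fq] [Fintype Fq] (hcard : Fintype.card Fq = q)
    (f : Fq[X]) (hf : f ≠ 0) (r : ℕ)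
    (hr : r = Nat.card {g : Fq[X] // g.Monic ∧ Irreducible g ∧ g ∣ f}) :
    Nat.card ((Fq[X] ⧸ Ideal.span {f})ˣ →* Multiplicative (ZMod ℓ)) = ℓ ^ r := by
  classical
  subst hr
  subst hcard
  set S := {g : Fq[X] // g.Monic ∧ Irreducible g ∧ g ∣ f} with hS
  have : Finite S := by
    refine Set.Finite.subset
      (UniqueFactorizationMonoid.normalizedFactors f).toFinset.finite_toSet ?_
    rintro g ⟨h1, h2, h3⟩
    simp only [Finset.mem_coe, Multiset.mem_toFinset]
    rw [UniqueFactorizationMonoid.mem_normalizedFactors_iff' hf]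
    exact ⟨h2, h1.normalize_eq_self, h3⟩
  have key : ∀ p : Fq[X], Prime p → p ∣ f → ∃ g : S, Associated g.1 p := fun p hp hpf =>
    ⟨⟨normalize p, monic_normalize hp.ne_zero,
      (normalize_associated p).symm.irreducible hp.irreducible,
      (normalize_associated p).dvd.trans hpf⟩, normalize_associated p⟩
  have hle : ∀ g : S, Ideal.span {f} ≤ Ideal.span {g.1} := fun g =>
    Ideal.span_singleton_le_span_singleton.2 g.2.2.2
  let φ : (Fq[X] ⧸ Ideal.span {f})ˣ →* (∀ g : S, (Fq[X] ⧸ Ideal.span {g.1})ˣ) :=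
    MonoidHom.pi fun g => Units.map (Ideal.Quotient.factor (hle g) : _ →* _)
  have hφ : Function.Surjective φ := by
    intro y
    have hco : Pairwise fun g h : S => IsCoprime (Ideal.span {g.1}) (Ideal.span {h.1}) := by
      intro g h hgh
      rw [Ideal.isCoprime_span_singleton_iff, g.2.2.1.coprime_iff_not_dvd]
      intro hd
      exact hgh (Subtype.ext (eq_of_monic_of_associated g.2.1 h.2.1
        (g.2.2.1.associated_of_dvd h.2.2.1 hd)))
    obtain ⟨a, ha⟩ := Ideal.pi_quotient_surjective hco (fun g => (y g : Fq[X] ⧸ Ideal.span {g.1}))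
    have hcop : IsCoprime a f := by
      refine isCoprime_of_prime_dvd (fun h => hf h.2) ?_
      intro p hp hpa hpf
      obtain ⟨g, hg⟩ := key p hp hpf
      have h0 : Ideal.Quotient.mk (Ideal.span {g.1}) a = 0 := by
        rw [Ideal.Quotient.eq_zero_iff_mem, Ideal.mem_span_singleton]
        exact hg.dvd.trans hpa
      have h1 := ha g
      rw [h0] at h1
      have : Nontrivial (Fq[X] ⧸ Ideal.span {g.1}) :=
        Ideal.Quotient.nontrivial_iff.2 (by
          rw [Ne, Ideal.span_singleton_eq_top]; exact g.2.2.1.not_isUnit)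
      exact (y g).ne_zero h1.symm
    obtain ⟨b, c, hbc⟩ := hcop
    have hm : Ideal.Quotient.mk (Ideal.span {f}) a * Ideal.Quotient.mk (Ideal.span {f}) b = 1 := by
      rw [← map_mul, ← map_one (Ideal.Quotient.mk (Ideal.span {f})), Ideal.Quotient.eq,
        Ideal.mem_span_singleton]
      exact ⟨-c, by linear_combination hbc⟩
    refine ⟨Units.mkOfMulEqOne _ _ hm, ?_⟩
    funext g
    apply Units.ext
    rw [← ha g]
    rfl
  have hker : ∀ ψ : (Fq[X] ⧸ Ideal.span {f})ˣ →* Multiplicative (ZMod ℓ), φ.ker ≤ ψ.ker := by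
    intro ψ u hu
    rw [MonoidHom.mem_ker] at hu ⊢
    obtain ⟨p, hpc⟩ := CharP.exists Fq
    obtain ⟨n, hp, hq⟩ := FiniteField.card Fq p
    have := Fact.mk hp
    obtain ⟨a, ha⟩ := Ideal.Quotient.mk_surjective (u : Fq[X] ⧸ Ideal.span {f})
    have hdiv : ∀ g : S, g.1 ∣ a - 1 := by
      intro g
      have h1 := congrArg Units.val (congrFun hu g)
      have h2 : Ideal.Quotient.factor (hle g) (u : Fq[X] ⧸ Ideal.span {f}) = 1 := h1
      rw [← ha, Ideal.Quotient.factor_mk, ← map_one (Ideal.Quotient.mk (Ideal.span {g.1})),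
        Ideal.Quotient.eq, Ideal.mem_span_singleton] at h2
      exact h2
    have hrad : a - 1 ∈ (Ideal.span {f}).radical := by
      rw [Ideal.radical_eq_sInf, Ideal.mem_sInf]
      rintro J ⟨hJ, hJp⟩
      obtain ⟨x, rfl⟩ := (IsPrincipalIdealRing.principal J).principal
      rw [Ideal.submodule_span_eq] at *
      rw [Ideal.span_singleton_le_span_singleton] at hJ
      have hx : x ≠ 0 := by
        rintro rfl
        exact hf (zero_dvd_iff.1 hJ)
      obtain ⟨g, hg⟩ := key x ((Ideal.span_singleton_prime hx).1 hJp) hJ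
      rw [Ideal.mem_span_singleton]
      exact hg.symm.dvd.trans (hdiv g)
    obtain ⟨k, hk⟩ := hrad
    have hk2 : f ∣ (a - 1) ^ p ^ k :=
      (Ideal.mem_span_singleton.1 hk).trans (pow_dvd_pow _ (Nat.lt_pow_self hp.one_lt).le)
    rw [sub_pow_char_pow, one_pow] at hk2
    have hu1 : u ^ p ^ k = 1 := by
      apply Units.ext
      rw [Units.val_pow_eq_pow_val, ← ha, ← map_pow, Units.val_one,
        ← map_one (Ideal.Quotient.mk (Ideal.span {f})), Ideal.Quotient.eq,
        Ideal.mem_span_singleton]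
      exact hk2
    have ho1 : orderOf (ψ u) ∣ p ^ k :=
      orderOf_dvd_of_pow_eq_one (by rw [← map_pow, hu1, map_one])
    have ho2 : orderOf (ψ u) ∣ ℓ := by
      have := orderOf_dvd_natCard (ψ u)
      rwa [Nat.card_congr Multiplicative.toAdd, Nat.card_zmod] at this
    have hne : ℓ ≠ p := by
      rintro rfl
      have h1 : ℓ ∣ Fintype.card Fq := hq ▸ dvd_pow_self ℓ n.pos.ne'
      have h2 := (Nat.dvd_sub_iff_right Fintype.card_pos h1).1 hdvd
      exact hℓ.one_lt.ne' (Nat.dvd_one.1 h2)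
    have hcp : Nat.Coprime (p ^ k) ℓ :=
      Nat.Coprime.pow_left _ ((Nat.coprime_primes hp hℓ).2 hne.symm)
    exact orderOf_eq_one_iff.1 (Nat.eq_one_of_dvd_coprimes hcp ho1 ho2)
  rw [← card_hom_pi ℓ S (fun g => (Fq[X] ⧸ Ideal.span {g.1})ˣ)
    (fun g => card_units_dvd ℓ Fq hdvd g.1 g.2.2.1 hℓ),
    ← Nat.card_congr (φ.liftOfSurjective hφ),
    Nat.card_congr (Equiv.subtypeUnivEquiv hker)]
end

section
/- Let 𝔽_q be a finite field, m ≥ 1, and let f ∈ 𝔽_q[t][x₁,…,x_m] be a polynomial that is squarefree when viewed as an element of 𝔽_q(t)[x₁,…,x_m]. Let P be a finite set of monic irreducible polynomials of 𝔽_q[t]. For each monic irreducible π ∉ P, let c_π denote the number of m-tuples x ∈ (𝔽_q[t]/(π²))^m with f(x) = 0 in 𝔽_q[t]/(π²). Then the infinite product ∏_{π ∉ P} (1 − c_π / q^{2m·deg π}) over monic irreducibles π ∉ P converges, and the density lim_{n→∞} (1/q^{nm}) · #{ x = (x₁,…,x_m) ∈ (𝔽_q[t])^m : deg x_i < n for all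 i, and π² does not divide f(x) for any monic irreducible π ∉ P } exists and equals this product. -/
open Polynomial Filter

set_option linter.unusedSectionVars false

namespace SqSieve

section Algebra

variable {Fq : Type} [Field Fq]

/-- Coefficientwise derivative with respect to `t`. -/
noncomputable def dT {σ : Type} (f : MvPolynomial σ Fq[X]) : MvPolynomial σ Fq[X] :=
  ∑ s ∈ f.support, MvPolynomial.monomial s (derivative (MvPolynomial.coeff s f))

lemma coeff_dT {σ : Type} (f : MvPolynomial σ Fq[X]) (s : σ →₀ ℕ) :
    MvPolynomial.coeff s (dT f) = derivative (MvPolynomial.coeff s f) := by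
  classical
  rw [dT, MvPolynomial.coeff_sum]
  simp only [MvPolynomial.coeff_monomial]
  rw [Finset.sum_ite_eq' f.support s]
  split_ifs with h
  · rfl
  · rw [MvPolynomial.notMem_support_iff.mp h, derivative_zero]

lemma dT_add {σ : Type} (f g : MvPolynomial σ Fq[X]) : dT (f + g) = dT f + dT g := by
  ext1 s
  simp [coeff_dT]

lemma dT_mul {σ : Type} (f g : MvPolynomial σ Fq[X]) : dT (f * g) = dT f * g + f * dT g := by
  classical
  ext1 s
  simp only [coeff_dT, MvPolynomial.coeff_mul, MvPolynomial.coeff_add, derivative_sum,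
    derivative_mul, Finset.sum_add_distrib]

lemma dT_C {σ : Type} (a : Fq[X]) :
    dT (MvPolynomial.C a : MvPolynomial σ Fq[X]) = MvPolynomial.C (derivative a) := by
  classical
  ext1 s
  simp only [coeff_dT, MvPolynomial.coeff_C]
  split_ifs <;> simp

lemma dT_X {σ : Type} (i : σ) :
    dT (MvPolynomial.X i : MvPolynomial σ Fq[X]) = 0 := by
  classical
  ext1 s
  simp only [coeff_dT, MvPolynomial.coeff_X]
  split_ifs <;> simp

/-- Chain rule. -/
lemma derivative_eval {σ : Type} [Fintype σ] (x : σ → Fq[X]) (f : MvPolynomial σ Fq[X]) :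
    derivative (MvPolynomial.eval x f) = MvPolynomial.eval x (dT f) +
      ∑ j, MvPolynomial.eval x (MvPolynomial.pderiv j f) * derivative (x j) := by
  classical
  induction f using MvPolynomial.induction_on with
  | C a => simp [dT_C]
  | add f g hf hg =>
    simp only [map_add, dT_add, hf, hg, add_mul, Finset.sum_add_distrib]
    ring
  | mul_X f i hf =>
    simp only [map_mul, dT_mul, dT_X, mul_zero, add_zero, MvPolynomial.eval_X, derivative_mul, hf,
      Derivation.leibniz, smul_eq_mul, map_add, add_mul, Finset.sum_add_distrib,
      MvPolynomial.pderiv_X, Pi.single_apply]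
    have : ∑ j, MvPolynomial.eval x f * MvPolynomial.eval x
        (if i = j then (1 : MvPolynomial σ Fq[X]) else 0) * derivative (x j)
        = MvPolynomial.eval x f * derivative (x i) := by
      rw [Finset.sum_eq_single i]
      · simp
      · intro b _ hb
        simp [hb.symm]
      · simp
    simp only [eq_comm] at this ⊢
    rw [← this, Finset.sum_mul]
    have h2 : ∀ j, x i * MvPolynomial.eval x (MvPolynomial.pderiv j f) * derivative (x j)
      = MvPolynomial.eval x (MvPolynomial.pderiv j f) * derivative (x j) * x i := by
      intro j; ring
    simp only [h2]
    ring

lemma pderiv_eq_zero_of_dvd {σ : Type} {g : MvPolynomial σ Fq[X]} (hg : g ≠ 0) (j : σ)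
    (h : g ∣ MvPolynomial.pderiv j g) : MvPolynomial.pderiv j g = 0 := by
  classical
  by_contra h0
  obtain ⟨k, hk⟩ := h
  have hk0 : k ≠ 0 := by rintro rfl; simp [hk] at h0
  have h1 := MvPolynomial.totalDegree_mul_of_isDomain hg hk0
  rw [← hk] at h1
  obtain ⟨s, hs, hs2⟩ : ∃ s ∈ (MvPolynomial.pderiv j g).support,
      (MvPolynomial.pderiv j g).totalDegree = s.sum fun _ e => e := by
    obtain ⟨s, hs, h⟩ := Finset.exists_mem_eq_sup (MvPolynomial.pderiv j g).support
      (MvPolynomial.support_nonempty.mpr h0) (fun s => s.sum fun _ e => e)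
    exact ⟨s, hs, h⟩
  have h3 : s + Finsupp.single j 1 ∈ g.support := by
    rw [MvPolynomial.mem_support_iff] at hs ⊢
    intro h
    rw [MvPolynomial.coeff_pderiv, h, zero_mul] at hs
    exact hs rfl
  have h4 := MvPolynomial.le_totalDegree h3
  rw [Finsupp.sum_add_index' (by simp) (by simp), Finsupp.sum_single_index rfl] at h4
  omega

lemma dT_eq_zero_of_dvd {σ : Type} {g : MvPolynomial σ Fq[X]} (hg : g ≠ 0)
    (h : g ∣ dT g) : dT g = 0 := by
  classical
  by_contra h0
  obtain ⟨k, hk⟩ := h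
  have hk0 : k ≠ 0 := by rintro rfl; simp [hk] at h0
  have h1 := MvPolynomial.totalDegree_mul_of_isDomain hg hk0
  rw [← hk] at h1
  have h2 : (dT g).totalDegree ≤ g.totalDegree := by
    apply Finset.sup_mono
    intro s hs
    rw [MvPolynomial.mem_support_iff] at hs ⊢
    intro h
    rw [coeff_dT, h, derivative_zero] at hs
    exact hs rfl
  have h3 : k.totalDegree = 0 := by omega
  rw [MvPolynomial.totalDegree_eq_zero_iff_eq_C] at h3
  set a := MvPolynomial.coeff 0 k
  rw [h3] at hk
  have ha : a ≠ 0 := by rintro h; rw [h] at h3; simp at h3; exact hk0 h3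
  obtain ⟨s, hs⟩ := MvPolynomial.support_nonempty.mpr hg
  rw [MvPolynomial.mem_support_iff] at hs
  have h4 := congrArg (MvPolynomial.coeff s) hk
  rw [coeff_dT, mul_comm, MvPolynomial.coeff_C_mul] at h4
  have h5 := Polynomial.degree_derivative_lt hs
  rw [h4, degree_mul] at h5
  have h6 : (MvPolynomial.coeff s g).degree ≤ a.degree + (MvPolynomial.coeff s g).degree := by
    have := Polynomial.zero_le_degree_iff.mpr ha
    exact le_add_of_nonneg_left this
  exact absurd h5 (not_lt.mpr h6)

lemma exists_pow_of_derivative (p : ℕ) [Fact p.Prime] [CharP Fq p] [Finite Fq] (a : Fq[X])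
    (h : derivative a = 0) : ∃ b : Fq[X], b ^ p = a := by
  have h1 := expand_contract p h (Fact.out : p.Prime).ne_zero
  refine ⟨(contract p a).map (frobeniusEquiv Fq p).symm, ?_⟩
  rw [← polynomial_expand_eq, h1]

end Algebra
end SqSieve

namespace SqSieve
section Algebra2
variable {Fq : Type} [Field Fq]

lemma isConst_of_irreducible_factors {σ : Type} [Finite σ] (h : MvPolynomial σ Fq[X]) (h0 : h ≠ 0)
    (H : ∀ g, Irreducible g → g ∣ h → ∃ a : Fq[X], g = MvPolynomial.C a) :
    ∃ a : Fq[X], h = MvPolynomial.C a := by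
  induction h using WfDvdMonoid.induction_on_irreducible with
  | zero => exact absurd rfl h0
  | unit u hu =>
    have h1 : u ∣ MvPolynomial.C 1 := hu.dvd
    rw [MvPolynomial.dvd_C_iff_exists one_ne_zero] at h1
    obtain ⟨b, -, hb⟩ := h1
    exact ⟨b, hb⟩
  | mul a i ha hi ih =>
    obtain ⟨b, rfl⟩ := ih ha (fun g hg hga => H g hg (hga.mul_left i))
    obtain ⟨c, rfl⟩ := H i hi (dvd_mul_right _ _)
    exact ⟨c * b, by simp⟩

lemma exists_pow_of_derivs {σ : Type} (p : ℕ) [Fact p.Prime] [CharP Fq p] [Finite Fq]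
    (g : MvPolynomial σ Fq[X]) (hT : dT g = 0) (hD : ∀ j, MvPolynomial.pderiv j g = 0) :
    ∃ r, r ^ p = g := by
  classical
  have hp : p.Prime := Fact.out
  have h1 : ∀ s, ∃ b : Fq[X], b ^ p = MvPolynomial.coeff s g := fun s =>
    exists_pow_of_derivative p _ (by rw [← coeff_dT, hT, MvPolynomial.coeff_zero])
  choose b hb using h1
  have h2 : ∀ s ∈ g.support, ∀ j, p ∣ s j := by
    intro s hs j
    rcases Nat.eq_zero_or_pos (s j) with h | h
    · simp [h]
    have h3 := congrArg (MvPolynomial.coeff (s - Finsupp.single j 1)) (hD j)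
    rw [MvPolynomial.coeff_pderiv, MvPolynomial.coeff_zero] at h3
    have h4 : s - Finsupp.single j 1 + Finsupp.single j 1 = s := by
      ext i
      by_cases hij : j = i
      · subst hij; simp; omega
      · simp [hij]
    rw [h4] at h3
    rcases mul_eq_zero.mp h3 with h5 | h5
    · exact absurd h5 (MvPolynomial.mem_support_iff.mp hs)
    · have h6 : ((s j : ℕ) : Fq[X]) = 0 := by
        rw [← h5]
        have : ((s - Finsupp.single j 1 : σ →₀ ℕ) j) = s j - 1 := by simp
        rw [this, ← Nat.cast_succ]
        congr 1; omega
      exact (CharP.cast_eq_zero_iff Fq[X] p _).mp h6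
  refine ⟨∑ s ∈ g.support, MvPolynomial.monomial
    (Finsupp.mapRange (fun k => k / p) (by simp) s) (b s), ?_⟩
  rw [sum_pow_char p]
  conv_rhs => rw [g.as_sum]
  refine Finset.sum_congr rfl fun s hs => ?_
  rw [MvPolynomial.monomial_pow, hb]
  have h5 : p • Finsupp.mapRange (fun k => k / p) (by simp) s = s := by
    ext j
    simp [Nat.mul_div_cancel' (h2 s hs j)]
  rw [h5]

lemma isConst_of_dvd_derivs {σ : Type} [Finite σ] (p : ℕ) [Fact p.Prime] [CharP Fq p] [Finite Fq]
    (f : MvPolynomial σ Fq[X])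
    (hsqf : Squarefree (MvPolynomial.map (algebraMap Fq[X] (RatFunc Fq)) f))
    (h : MvPolynomial σ Fq[X]) (hf : h ∣ f) (hT : h ∣ dT f) (hD : ∀ j, h ∣ MvPolynomial.pderiv j f) :
    ∃ a : Fq[X], h = MvPolynomial.C a := by
  have hinj : Function.Injective (algebraMap Fq[X] (RatFunc Fq)) :=
    IsFractionRing.injective _ _
  have hf0 : f ≠ 0 := by
    rintro rfl
    rw [map_zero] at hsqf
    exact not_squarefree_zero hsqf
  refine isConst_of_irreducible_factors h (ne_zero_of_dvd_ne_zero hf0 hf) fun g hg hgh => ?_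
  have hgp : Prime g := hg.prime
  obtain ⟨e, he⟩ := hgh.trans hf
  by_cases hge : g ∣ e
  · have h1 : g * g ∣ f := by rw [he]; exact mul_dvd_mul_left g hge
    have h2 := hsqf (MvPolynomial.map (algebraMap Fq[X] (RatFunc Fq)) g) (by
      rw [← map_mul]; exact map_dvd _ h1)
    have h3 : MvPolynomial.map (algebraMap Fq[X] (RatFunc Fq)) g ∣ MvPolynomial.C 1 := h2.dvd
    rw [MvPolynomial.dvd_C_iff_exists one_ne_zero] at h3
    obtain ⟨b, -, hb⟩ := h3
    refine ⟨MvPolynomial.coeff 0 g, ?_⟩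
    classical
    ext1 s
    apply hinj
    rw [← MvPolynomial.coeff_map, hb, MvPolynomial.coeff_C, MvPolynomial.coeff_C]
    split_ifs with hs
    · rw [← MvPolynomial.coeff_map, hb]; simp
    · simp
  · exfalso
    have key : ∀ g' e' : MvPolynomial σ Fq[X], g ∣ g' * e + g * e' → g ∣ g' := by
      intro g' e' h
      have := (dvd_add_left (dvd_mul_right g e')).mp h
      exact (hgp.dvd_or_dvd this).resolve_right hge
    have hT0 : dT g = 0 := by
      apply dT_eq_zero_of_dvd hg.ne_zero
      apply key _ (dT e)
      rw [← dT_mul, ← he]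
      exact hgh.trans hT
    have hD0 : ∀ j, MvPolynomial.pderiv j g = 0 := by
      intro j
      apply pderiv_eq_zero_of_dvd hg.ne_zero
      apply key _ (MvPolynomial.pderiv j e)
      have : MvPolynomial.pderiv j g * e + g * MvPolynomial.pderiv j e = MvPolynomial.pderiv j f := by
        rw [he, Derivation.leibniz, smul_eq_mul, smul_eq_mul]; ring
      rw [this]
      exact hgh.trans (hD j)
    obtain ⟨r, hr⟩ := exists_pow_of_derivs p g hT0 hD0
    rw [← hr] at hg
    exact not_irreducible_pow (Fact.out : p.Prime).ne_one hg

/-- Elimination of one variable. -/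
lemma exists_elim {B : Type} [CommRing B] [IsDomain B] [UniqueFactorizationMonoid B]
    (F : Set B[X]) (hF : ∀ g : B[X], (∀ f ∈ F, g ∣ f) → g.natDegree = 0) :
    ∃ R : B, R ≠ 0 ∧ C R ∈ Ideal.span F := by
  classical
  by_contra hcon
  push Not at hcon
  let K := FractionRing B
  let _ : Algebra B[X] K[X] := Polynomial.algebra B K
  have : IsLocalization (Submonoid.map (C : B →+* B[X]) (nonZeroDivisors B)) K[X] :=
    Polynomial.isLocalization _ _
  have h1 : Ideal.map (algebraMap B[X] K[X]) (Ideal.span F) ≠ ⊤ := by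
    rw [IsLocalization.map_algebraMap_ne_top_iff_disjoint
      (Submonoid.map (C : B →+* B[X]) (nonZeroDivisors B)) K[X], Set.disjoint_left]
    rintro _ ⟨r, hr, rfl⟩ h
    exact hcon r (nonZeroDivisors.ne_zero hr) h
  set J := Ideal.map (algebraMap B[X] K[X]) (Ideal.span F) with hJ
  obtain ⟨h, hh⟩ : ∃ h, J = Ideal.span {h} :=
    (IsPrincipalIdealRing.principal J).principal
  have hdiv : ∀ f ∈ F, h ∣ f.map (algebraMap B K) := by
    intro f hf
    rw [← Ideal.mem_span_singleton, ← hh]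
    exact Ideal.mem_map_of_mem (algebraMap B[X] K[X]) (Ideal.subset_span hf)
  have hh0 : h ≠ 0 := by
    rintro rfl
    have : (X : B[X]).natDegree = 0 := hF X (fun f hf => by
      have h2 := zero_dvd_iff.mp (hdiv f hf)
      have h3 : f = 0 := Polynomial.map_injective _ (IsFractionRing.injective B K)
        (by rw [h2, Polynomial.map_zero])
      simp [h3])
    simp at this
  have hhu : ¬ IsUnit h := by
    intro hu
    exact h1 (by rw [hh, Ideal.span_singleton_eq_top]; exact hu)
  have hdeg : h.natDegree ≠ 0 := by
    intro h2
    rw [Polynomial.natDegree_eq_zero] at h2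
    obtain ⟨x, rfl⟩ := h2
    apply hhu
    rw [Polynomial.isUnit_C, isUnit_iff_ne_zero]
    rintro rfl
    simp at hh0
  obtain ⟨b, hb, hb2⟩ := IsLocalization.integerNormalization_spec (nonZeroDivisors B) h
  set h' := IsLocalization.integerNormalization (nonZeroDivisors B) h
  have hb0 : (algebraMap B K b) ≠ 0 := by
    simpa using nonZeroDivisors.ne_zero hb
  let _ : NormalizedGCDMonoid B := Classical.choice inferInstance
  have hmap : h'.map (algebraMap B K) = C (algebraMap B K b) * h := by
    rw [hb2, ← smul_eq_C_mul, algebraMap_smul]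
  have hh'0 : h' ≠ 0 := by
    intro h2
    rw [h2, Polynomial.map_zero] at hmap
    exact mul_ne_zero (by simpa using hb0) hh0 hmap.symm
  have hpp : h' = C h'.content * h'.primPart := h'.eq_C_content_mul_primPart
  have hcont : algebraMap B K h'.content ≠ 0 := by
    simpa [content_eq_zero_iff] using hh'0
  have h5 : h'.primPart.natDegree = 0 := hF _ (fun f hf => by
    rw [(isPrimitive_primPart h').dvd_iff_fraction_map_dvd_fraction_map K]
    have h3 : (h'.primPart.map (algebraMap B K)) ∣ h'.map (algebraMap B K) :=
      Polynomial.map_dvd _ ⟨C h'.content, by rw [mul_comm]; exact hpp⟩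
    refine h3.trans ?_
    rw [hmap]
    have : IsUnit (C (algebraMap B K b)) := by
      rw [Polynomial.isUnit_C, isUnit_iff_ne_zero]; exact hb0
    rw [this.mul_left_dvd]
    exact hdiv f hf)
  rw [natDegree_primPart] at h5
  have h6 := congrArg natDegree hmap
  rw [natDegree_C_mul hb0, natDegree_map_eq_of_injective (IsFractionRing.injective B K)] at h6
  omega

end Algebra2
end SqSieve

namespace SqSieve
section Subst
variable {Fq : Type} [Field Fq] {ι : Type} [Fintype ι] (k : ℕ)

/-- Index type of the new variables: `inr j` is `u₀ⱼ`, `inl (inl j)` is `u₁ⱼ`, and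
`inl (inr (j, i))` is `u_{i+2, j}`. -/
abbrev Idx (ι : Type) (k : ℕ) : Type := (ι ⊕ ι × Fin k) ⊕ ι

/-- The form `x_j = ∑ tⁱ u_{ij}`. -/
noncomputable def xx (j : ι) : MvPolynomial (Idx ι k) Fq[X] :=
  MvPolynomial.X (Sum.inr j) + MvPolynomial.C X * MvPolynomial.X (Sum.inl (Sum.inl j)) +
    ∑ i : Fin k, MvPolynomial.C (X ^ (i.1 + 2)) * MvPolynomial.X (Sum.inl (Sum.inr (j, i)))

/-- The form `w_j = ∑ i tⁱ⁻¹ u_{ij}`. -/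
noncomputable def ww (j : ι) : MvPolynomial (Idx ι k) Fq[X] :=
  MvPolynomial.X (Sum.inl (Sum.inl j)) +
    ∑ i : Fin k, MvPolynomial.C (derivative (X ^ (i.1 + 2))) *
      MvPolynomial.X (Sum.inl (Sum.inr (j, i)))

/-- `f(x(u))` -/
noncomputable def FF (f : MvPolynomial ι Fq[X]) : MvPolynomial (Idx ι k) Fq[X] :=
  MvPolynomial.aeval (xx k) f

/-- The derivative of `f(x)` in terms of the `u`. -/
noncomputable def GG (f : MvPolynomial ι Fq[X]) : MvPolynomial (Idx ι k) Fq[X] :=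
  MvPolynomial.aeval (xx k) (dT f) +
    ∑ j, MvPolynomial.aeval (xx k) (MvPolynomial.pderiv j f) * ww k j

/-- Change of variables. -/
noncomputable def psi : MvPolynomial (Idx ι k) Fq[X] →ₐ[Fq[X]] MvPolynomial (Idx ι k) Fq[X] :=
  MvPolynomial.aeval (Sum.elim (Sum.elim
    (fun j => MvPolynomial.X (Sum.inl (Sum.inl j)) -
      ∑ i : Fin k, MvPolynomial.C (derivative (X ^ (i.1 + 2))) *
        MvPolynomial.X (Sum.inl (Sum.inr (j, i))))
    (fun a => MvPolynomial.X (Sum.inl (Sum.inr a))))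
    (fun j => MvPolynomial.X (Sum.inr j) - MvPolynomial.C X *
      (MvPolynomial.X (Sum.inl (Sum.inl j)) -
      ∑ i : Fin k, MvPolynomial.C (derivative (X ^ (i.1 + 2))) *
        MvPolynomial.X (Sum.inl (Sum.inr (j, i)))) -
      ∑ i : Fin k, MvPolynomial.C (X ^ (i.1 + 2)) * MvPolynomial.X (Sum.inl (Sum.inr (j, i)))))

/-- The inverse change of variables. -/
noncomputable def phi : MvPolynomial (Idx ι k) Fq[X] →ₐ[Fq[X]] MvPolynomial (Idx ι k) Fq[X] :=
  MvPolynomial.aeval (Sum.elim (Sum.elim (ww k)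
    (fun a => MvPolynomial.X (Sum.inl (Sum.inr a)))) (xx k))

lemma algHom_C {σ τ : Type} (φ : MvPolynomial σ Fq[X] →ₐ[Fq[X]] MvPolynomial τ Fq[X]) (a : Fq[X]) :
    φ (MvPolynomial.C a) = MvPolynomial.C a := φ.commutes a

lemma phi_psi (h : MvPolynomial (Idx ι k) Fq[X]) : phi k (psi k h) = h := by
  have : ((phi k).comp (psi k) : MvPolynomial (Idx ι k) Fq[X] →ₐ[Fq[X]] _) = AlgHom.id _ _ := by
    apply MvPolynomial.algHom_ext
    rintro ((j | a) | j)
    · simp [phi, psi, ww, MvPolynomial.algebraMap_eq]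
    · simp [phi, psi]
    · simp [phi, psi, ww, xx, MvPolynomial.algebraMap_eq]
      ring
  exact congrArg (fun g => g h) this

lemma psi_xx (j : ι) : psi (Fq := Fq) k (xx k j) = MvPolynomial.X (Sum.inr j) := by
  simp [psi, xx, MvPolynomial.algebraMap_eq]
  ring

lemma psi_ww (j : ι) : psi (Fq := Fq) k (ww k j) = MvPolynomial.X (Sum.inl (Sum.inl j)) := by
  simp [psi, ww, MvPolynomial.algebraMap_eq]

lemma sum_psi_aeval (f : MvPolynomial ι Fq[X]) :
    MvPolynomial.sumAlgEquiv Fq[X] (ι ⊕ ι × Fin k) ι (psi k (MvPolynomial.aeval (xx k) f)) =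
      MvPolynomial.C f := by
  have : ((MvPolynomial.sumAlgEquiv Fq[X] (ι ⊕ ι × Fin k) ι).toAlgHom.comp
      ((psi k).comp (MvPolynomial.aeval (xx k)))) =
      IsScalarTower.toAlgHom Fq[X] (MvPolynomial ι Fq[X]) _ := by
    apply MvPolynomial.algHom_ext
    intro j
    simp [psi_xx, MvPolynomial.algebraMap_eq]
  exact congrArg (fun g => g f) this

lemma isConst_of_dvd_FF_GG (p : ℕ) [Fact p.Prime] [CharP Fq p] [Finite Fq]
    (f : MvPolynomial ι Fq[X])
    (hsqf : Squarefree (MvPolynomial.map (algebraMap Fq[X] (RatFunc Fq)) f))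
    (h : MvPolynomial (Idx ι k) Fq[X]) (hF : h ∣ FF k f) (hG : h ∣ GG k f) :
    ∃ a : Fq[X], h = MvPolynomial.C a := by
  classical
  have hf0 : f ≠ 0 := by
    rintro rfl
    rw [map_zero] at hsqf
    exact not_squarefree_zero hsqf
  let e := MvPolynomial.sumAlgEquiv Fq[X] (ι ⊕ ι × Fin k) ι
  have h1 : e (psi k h) ∣ MvPolynomial.C f := by
    rw [← sum_psi_aeval k f]
    exact map_dvd e (map_dvd (psi k) hF)
  have h2 : e (psi k h) ∣ MvPolynomial.C (dT f) + ∑ j, MvPolynomial.C (MvPolynomial.pderiv j f) *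
      MvPolynomial.X (Sum.inl j) := by
    have := map_dvd e (map_dvd (psi k) hG)
    rw [GG] at this
    simp only [map_add, map_sum, map_mul, psi_ww] at this
    simp only [e, sum_psi_aeval, MvPolynomial.sumAlgEquiv_X_inl] at this
    exact this
  rw [MvPolynomial.dvd_C_iff_exists hf0] at h1
  obtain ⟨g, hgf, hg⟩ := h1
  rw [hg, MvPolynomial.C_dvd_iff_dvd_coeff] at h2
  obtain ⟨a, ha⟩ := isConst_of_dvd_derivs p f hsqf g hgf (by
      have := h2 0
      simpa [MvPolynomial.coeff_sum, MvPolynomial.coeff_C_mul] using this) (fun j => by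
      have := h2 (Finsupp.single (Sum.inl j) 1)
      simp only [MvPolynomial.coeff_add, MvPolynomial.coeff_sum, MvPolynomial.coeff_C_mul,
        MvPolynomial.coeff_C, MvPolynomial.coeff_X, mul_ite, mul_one, mul_zero] at this
      rw [if_neg (by
        intro h0
        have := congrArg (fun s => s (Sum.inl j)) h0
        simp at this), zero_add, Finset.sum_eq_single j] at this
      · simpa using this
      · intro b _ hb
        rw [if_neg]
        intro h0
        rw [Finsupp.single_left_inj one_ne_zero] at h0
        exact hb (Sum.inl_injective h0)
      · simp)
  refine ⟨a, ?_⟩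
  have h3 : psi k h = MvPolynomial.C a := by
    apply e.injective
    rw [hg, ha]
    simp [e]
  rw [← phi_psi k h, h3, algHom_C]

end Subst
end SqSieve

namespace SqSieve
section Decomp
variable {Fq : Type} [Field Fq]

lemma eval_FF {ι : Type} [Fintype ι] (k : ℕ) (f : MvPolynomial ι Fq[X]) (u : Idx ι k → Fq[X]) :
    MvPolynomial.eval u (FF k f) =
      MvPolynomial.eval (fun j => MvPolynomial.eval u (xx k j)) f := by
  unfold FF
  induction f using MvPolynomial.induction_on with
  | C a => simp [MvPolynomial.algebraMap_eq]
  | add f g hf hg => rw [map_add, map_add, map_add, hf, hg]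
  | mul_X f i hf => rw [map_mul, map_mul, map_mul, hf, MvPolynomial.aeval_X, MvPolynomial.eval_X]

lemma eval_GG {ι : Type} [Fintype ι] (k : ℕ) (f : MvPolynomial ι Fq[X]) (u : Idx ι k → Fq[X])
    (hu : ∀ i, derivative (u i) = 0) :
    MvPolynomial.eval u (GG k f) =
      derivative (MvPolynomial.eval (fun j => MvPolynomial.eval u (xx k j)) f) := by
  have h1 : ∀ j, derivative (MvPolynomial.eval u (xx (Fq := Fq) k j)) =
      MvPolynomial.eval u (ww k j) := by
    intro j
    simp [xx, ww, hu]
  rw [derivative_eval]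
  simp only [h1]
  rw [GG, map_add, map_sum]
  simp only [map_mul]
  have h2 := fun g : MvPolynomial ι Fq[X] => eval_FF k g u
  simp only [FF] at h2
  simp only [h2]

lemma derivative_pow_char (p : ℕ) [CharP Fq p] (y : Fq[X]) : derivative (y ^ p) = 0 := by
  rw [derivative_pow]
  simp

lemma exists_decomp [Finite Fq] (p : ℕ) [Fact p.Prime] [CharP Fq p] (n : ℕ) (x : Fq[X])
    (hx : x.degree < (n * p : ℕ)) :
    ∃ y : Fin p → Fq[X], (∀ i, (y i).degree < n) ∧ x = ∑ i : Fin p, X ^ (i : ℕ) * (y i) ^ p := by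
  classical
  refine ⟨fun i => ∑ l : Fin n, C ((frobeniusEquiv Fq p).symm (x.coeff (i + p * l))) * X ^ (l : ℕ),
    fun i => degree_sum_fin_lt _, ?_⟩
  have h1 : ∀ i : Fin p, (∑ l : Fin n,
      C ((frobeniusEquiv Fq p).symm (x.coeff (i + p * l))) * X ^ (l : ℕ)) ^ p =
      ∑ l : Fin n, C (x.coeff (i + p * l)) * X ^ (p * (l : ℕ)) := by
    intro i
    rw [sum_pow_char p]
    refine Finset.sum_congr rfl fun l _ => ?_
    rw [mul_pow, ← C_pow, frobeniusEquiv_symm_pow_p, ← pow_mul, mul_comm p]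
  simp only [h1, Finset.mul_sum]
  rw [Finset.sum_comm, ← Fintype.sum_prod_type' (f := fun (l : Fin n) (i : Fin p) =>
    X ^ (i : ℕ) * (C (x.coeff (i + p * l)) * X ^ (p * (l : ℕ))))]
  rw [Fintype.sum_equiv finProdFinEquiv _ (fun j : Fin (n * p) => C (x.coeff j) * X ^ (j : ℕ))
    (by
      rintro ⟨l, i⟩
      simp only [finProdFinEquiv_apply_val]
      rw [pow_add]; ring)]
  rw [Fin.sum_univ_eq_sum_range (fun j => C (x.coeff j) * X ^ j)]
  ext j
  rw [finsetSum_coeff]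
  simp only [coeff_C_mul, coeff_X_pow, mul_ite, mul_one, mul_zero]
  rw [Finset.sum_ite_eq]
  split_ifs with h
  · rfl
  · exact coeff_eq_zero_of_degree_lt (lt_of_lt_of_le hx (by
      rw [Finset.mem_range, not_lt] at h; exact_mod_cast h))

lemma exists_decomp' [Finite Fq] {ι : Type} (k : ℕ) [Fact (k + 2).Prime] [CharP Fq (k + 2)] (n : ℕ)
    (x : ι → Fq[X]) (hx : ∀ j, (x j).degree < (n * (k + 2) : ℕ)) :
    ∃ y : Idx ι k → Fq[X], (∀ i, (y i).degree < n) ∧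
      ∀ j, x j = MvPolynomial.eval (fun i => y i ^ (k + 2)) (xx k j) := by
  choose y hy hxy using fun j => exists_decomp (k + 2) n (x j) (hx j)
  refine ⟨Sum.elim (Sum.elim (fun j => y j 1) (fun a => y a.1 a.2.succ.succ)) (fun j => y j 0),
    ?_, ?_⟩
  · rintro ((j | a) | j)
    · exact hy _ _
    · exact hy _ _
    · exact hy _ _
  · intro j
    rw [hxy j, Fin.sum_univ_succ, Fin.sum_univ_succ]
    simp [xx]
    ring

variable [Fintype Fq]

/-- Polynomials of degree less than `n`. -/
noncomputable def box (Fq : Type) [Field Fq] [Fintype Fq] (n : ℕ) : Finset Fq[X] := by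
  classical
  exact Finset.univ.image (fun c : Fin n → Fq => ∑ i, C (c i) * X ^ (i : ℕ))

lemma mem_box {n : ℕ} {x : Fq[X]} : x ∈ box Fq n ↔ x.degree < n := by
  classical
  simp only [box, Finset.mem_image, Finset.mem_univ, true_and]
  constructor
  · rintro ⟨c, rfl⟩
    exact degree_sum_fin_lt _
  · intro h
    refine ⟨fun i => x.coeff i, ?_⟩
    rw [Fin.sum_univ_eq_sum_range (fun j => C (x.coeff j) * X ^ j)]
    ext j
    rw [finsetSum_coeff]
    simp only [coeff_C_mul, coeff_X_pow, mul_ite, mul_one, mul_zero]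
    rw [Finset.sum_ite_eq]
    split_ifs with h2
    · rfl
    · symm
      exact coeff_eq_zero_of_degree_lt (lt_of_lt_of_le h (by
        rw [Finset.mem_range, not_lt] at h2; exact_mod_cast h2))

lemma natCard_degreeLT (n : ℕ) : Nat.card (degreeLT Fq n) = Fintype.card Fq ^ n := by
  rw [Nat.card_congr (degreeLTEquiv Fq n).toEquiv]
  simp

instance (n : ℕ) : Finite (degreeLT Fq n) := Finite.of_equiv _ (degreeLTEquiv Fq n).toEquiv.symm

lemma card_box (n : ℕ) : (box Fq n).card = Fintype.card Fq ^ n := by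
  rw [← natCard_degreeLT]
  exact (Nat.subtype_card _ (fun x => by rw [mem_box, mem_degreeLT])).symm

end Decomp
end SqSieve

namespace SqSieve
section Counting

lemma card_preimage {G H : Type} [AddGroup G] [AddGroup H] (φ : G →+ H)
    (hφ : Function.Surjective φ) (T : Set H) :
    Nat.card {g // φ g ∈ T} * Nat.card H = Nat.card T * Nat.card G := by
  choose s hs using hφ
  have key : ∀ T : Set H, Nat.card {g // φ g ∈ T} = Nat.card T * Nat.card φ.ker := by
    intro T
    rw [← Nat.card_prod]
    refine Nat.card_congr ⟨fun g => ⟨⟨φ g.1, g.2⟩, ⟨g.1 - s (φ g.1), by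
      rw [AddMonoidHom.mem_ker, map_sub, hs, sub_self]⟩⟩,
      fun a => ⟨a.2.1 + s a.1.1, by
        rw [map_add, (AddMonoidHom.mem_ker).mp a.2.2, hs, zero_add]; exact a.1.2⟩, ?_, ?_⟩
    · intro g
      simp
    · rintro ⟨⟨t, ht⟩, ⟨g, hg⟩⟩
      rw [AddMonoidHom.mem_ker] at hg
      simp [hg, hs]
  have h1 := key Set.univ
  have h2 : Nat.card {g // φ g ∈ (Set.univ : Set H)} = Nat.card G :=
    Nat.card_congr (Equiv.subtypeUnivEquiv (by simp))
  rw [h2] at h1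
  have h3 : Nat.card (Set.univ : Set H) = Nat.card H := Nat.card_congr (Equiv.Set.univ H)
  rw [key T, h1, h3]
  ring

variable {Fq : Type} [Field Fq] [Fintype Fq]

lemma card_quot (D : Fq[X]) (hD : D ≠ 0) :
    Nat.card (Fq[X] ⧸ Ideal.span {D}) = Fintype.card Fq ^ D.natDegree := by
  have : Module.Finite Fq (Fq[X] ⧸ Ideal.span {D}) := (AdjoinRoot.powerBasis hD).finite
  rw [Module.natCard_eq_pow_finrank (K := Fq), finrank_quotient_span_eq_natDegree,
    Nat.card_eq_fintype_card]

lemma finite_quot (D : Fq[X]) (hD : D ≠ 0) : Finite (Fq[X] ⧸ Ideal.span {D}) := by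
  have : Module.Finite Fq (Fq[X] ⧸ Ideal.span {D}) := (AdjoinRoot.powerBasis hD).finite
  exact Module.finite_of_finite Fq

lemma exists_rep (D : Fq[X]) (hD : D ≠ 0) (n : ℕ) (hn : D.natDegree ≤ n) (r : Fq[X]) :
    ∃ x : Fq[X], x.degree < n ∧ D ∣ r - x := by
  refine ⟨r % D, ?_, ?_⟩
  · refine lt_of_lt_of_le (EuclideanDomain.mod_lt r hD) ?_
    rw [degree_eq_natDegree hD]
    exact_mod_cast hn
  · exact ⟨r / D, by rw [sub_eq_iff_eq_add]; exact (EuclideanDomain.div_add_mod r D).symm⟩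

/-- Reduction map on tuples. -/
noncomputable def redMap (Fq : Type) [Field Fq] (D : Fq[X]) (n N : ℕ) :
    (Fin N → degreeLT Fq n) →+ (Fin N → Fq[X] ⧸ Ideal.span {D}) where
  toFun y i := Ideal.Quotient.mk _ (y i : Fq[X])
  map_zero' := by ext; simp
  map_add' := by intros; ext; simp

lemma redMap_surj (D : Fq[X]) (hD : D ≠ 0) (n N : ℕ) (hn : D.natDegree ≤ n) :
    Function.Surjective (redMap Fq D n N) := by
  intro z
  choose r hr using fun i => Ideal.Quotient.mk_surjective (z i)
  choose x hx hx2 using fun i => exists_rep D hD n hn (r i)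
  refine ⟨fun i => ⟨x i, mem_degreeLT.mpr (hx i)⟩, ?_⟩
  funext i
  rw [← hr i]
  symm
  exact (Ideal.Quotient.mk_eq_mk_iff_sub_mem _ _).mpr (Ideal.mem_span_singleton.mpr (hx2 i))

open Classical in
lemma card_filter_box (n N : ℕ) (p : (Fin N → Fq[X]) → Prop) :
    ((Fintype.piFinset fun _ : Fin N => box Fq n).filter p).card =
      Nat.card {y : Fin N → degreeLT Fq n // p (fun i => (y i : Fq[X]))} := by
  rw [← Nat.subtype_card _ (fun x => Iff.rfl)]
  refine Nat.card_congr ⟨fun x => ⟨fun i => ⟨x.1 i, ?_⟩, ?_⟩, fun y => ⟨fun i => y.1 i, ?_⟩,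
    fun x => rfl, fun x => rfl⟩
  · have := x.2
    rw [Finset.mem_filter, Fintype.mem_piFinset] at this
    exact mem_degreeLT.mpr (mem_box.mp (this.1 i))
  · exact (Finset.mem_filter.mp x.2).2
  · rw [Finset.mem_filter, Fintype.mem_piFinset]
    exact ⟨fun i => mem_box.mpr (mem_degreeLT.mp (y.1 i).2), y.2⟩

lemma natCard_tuples (n N : ℕ) :
    Nat.card (Fin N → degreeLT Fq n) = Fintype.card Fq ^ (n * N) := by
  rw [Nat.card_fun, natCard_degreeLT, Nat.card_eq_fintype_card, Fintype.card_fin, pow_mul]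

lemma mk_eval {N : ℕ} (D : Fq[X]) (R : MvPolynomial (Fin N) Fq[X]) (y : Fin N → Fq[X]) :
    D ∣ MvPolynomial.eval y R ↔ MvPolynomial.eval (fun i => Ideal.Quotient.mk (Ideal.span {D}) (y i))
      (MvPolynomial.map (Ideal.Quotient.mk (Ideal.span {D})) R) = 0 := by
  rw [← Ideal.mem_span_singleton, ← Ideal.Quotient.eq_zero_iff_mem, MvPolynomial.eval_map]
  have := MvPolynomial.eval₂_comp_left (Ideal.Quotient.mk (Ideal.span {D})) (RingHom.id _) y R
  rw [MvPolynomial.eval₂_id] at this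
  rw [this]
  rfl

open Classical in
lemma sz_box {N : ℕ} (R : MvPolynomial (Fin N) Fq[X]) (hR : R ≠ 0) (n : ℕ) :
    ((Fintype.piFinset fun _ : Fin N => box Fq n).filter
      (fun y => MvPolynomial.eval y R = 0)).card * Fintype.card Fq ^ n ≤
      R.totalDegree * Fintype.card Fq ^ (n * N) := by
  have hq : (0 : ℚ≥0) < Fintype.card Fq := by exact_mod_cast Fintype.card_pos
  have := MvPolynomial.schwartz_zippel_totalDegree hR (box Fq n)
  rw [card_box, Nat.cast_pow, div_le_div_iff₀ (by positivity) (by positivity)] at this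
  rw [pow_mul]
  have h' : ((((Fintype.piFinset fun _ : Fin N => box Fq n).filter
      (fun y => MvPolynomial.eval y R = 0)).card * Fintype.card Fq ^ n : ℕ) : ℚ≥0) ≤
      ((R.totalDegree * (Fintype.card Fq ^ n) ^ N : ℕ) : ℚ≥0) := by
    push_cast
    convert! this
  exact_mod_cast h'

lemma totalDegree_map_le' {σ A B : Type} [CommSemiring A] [CommSemiring B] (φ : A →+* B)
    (R : MvPolynomial σ A) : (MvPolynomial.map φ R).totalDegree ≤ R.totalDegree := by
  unfold MvPolynomial.totalDegree
  exact Finset.sup_mono (MvPolynomial.support_map_subset _ _)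

open Classical in
lemma sz_mod {N : ℕ} (R : MvPolynomial (Fin N) Fq[X]) (π : Fq[X]) (hπ : Irreducible π)
    (hR : MvPolynomial.map (Ideal.Quotient.mk (Ideal.span {π})) R ≠ 0) (n : ℕ)
    (hn : π.natDegree ≤ n) :
    ((Fintype.piFinset fun _ : Fin N => box Fq n).filter
      (fun y => π ∣ MvPolynomial.eval y R)).card * Fintype.card Fq ^ π.natDegree ≤
      R.totalDegree * Fintype.card Fq ^ (n * N) := by
  have hq : (0 : ℚ≥0) < Fintype.card Fq := by exact_mod_cast Fintype.card_pos
  have : (Ideal.span {π}).IsPrime := (Ideal.span_singleton_prime hπ.ne_zero).mpr hπ.prime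
  have := finite_quot π hπ.ne_zero
  letI := Fintype.ofFinite (Fq[X] ⧸ Ideal.span {π})
  have hc : Fintype.card (Fq[X] ⧸ Ideal.span {π}) = Fintype.card Fq ^ π.natDegree := by
    rw [← Nat.card_eq_fintype_card, card_quot π hπ.ne_zero]
  set T : Set (Fin N → Fq[X] ⧸ Ideal.span {π}) := {z | MvPolynomial.eval z
    (MvPolynomial.map (Ideal.Quotient.mk (Ideal.span {π})) R) = 0} with hT
  have h1 := MvPolynomial.schwartz_zippel_totalDegree hR Finset.univ
  rw [Finset.card_univ, div_le_div_iff₀ (by rw [hc]; positivity) (by rw [hc]; positivity), hc] at h1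
  have h2 : (Nat.card T) * (Fintype.card Fq ^ π.natDegree) ≤
      R.totalDegree * (Fintype.card Fq ^ π.natDegree) ^ N := by
    have h3 : Nat.card T = (Finset.filter (fun z => MvPolynomial.eval z
      (MvPolynomial.map (Ideal.Quotient.mk (Ideal.span {π})) R) = 0)
      (Fintype.piFinset fun _ : Fin N => (Finset.univ : Finset (Fq[X] ⧸ Ideal.span {π})))).card := by
      exact Nat.subtype_card _ (by simp [hT])
    rw [h3]
    have h6 : (((Finset.filter (fun z => MvPolynomial.eval z
      (MvPolynomial.map (Ideal.Quotient.mk (Ideal.span {π})) R) = 0)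
      (Fintype.piFinset fun _ : Fin N =>
        (Finset.univ : Finset (Fq[X] ⧸ Ideal.span {π})))).card *
        Fintype.card Fq ^ π.natDegree : ℕ) : ℚ≥0) ≤
        (((MvPolynomial.map (Ideal.Quotient.mk (Ideal.span {π})) R).totalDegree *
        (Fintype.card Fq ^ π.natDegree) ^ N : ℕ) : ℚ≥0) := by
      push_cast at h1 ⊢
      convert! h1
    have h7 := (Nat.cast_le (α := ℚ≥0)).mp h6
    exact h7.trans (Nat.mul_le_mul_right _ 
      (totalDegree_map_le' _ _))
  have h4 := card_preimage (redMap Fq π n N) (redMap_surj π hπ.ne_zero n N hn) T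
  rw [natCard_tuples, Nat.card_fun, card_quot π hπ.ne_zero, Nat.card_eq_fintype_card (α := Fin N),
    Fintype.card_fin] at h4
  have h5 : ((Fintype.piFinset fun _ : Fin N => box Fq n).filter
      (fun y => π ∣ MvPolynomial.eval y R)).card = Nat.card {y // redMap Fq π n N y ∈ T} := by
    rw [card_filter_box]
    refine Nat.card_congr (Equiv.subtypeEquivRight fun y => ?_)
    rw [mk_eval]
    rfl
  rw [h5]
  have hpos : 0 < (Fintype.card Fq ^ π.natDegree) ^ N := by
    have : 0 < Fintype.card Fq := Fintype.card_pos
    positivity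
  refine Nat.le_of_mul_le_mul_right ?_ hpos
  calc _ = (Nat.card T * Fintype.card Fq ^ π.natDegree) * Fintype.card Fq ^ (n * N) := by
        rw [mul_right_comm, h4]; ring
    _ ≤ (R.totalDegree * (Fintype.card Fq ^ π.natDegree) ^ N) * Fintype.card Fq ^ (n * N) := by
        gcongr
    _ = _ := by ring

open Classical in
lemma one_var (h : Fq[X][X]) (π : Fq[X]) (hπ : Irreducible π)
    (hh : h.map (Ideal.Quotient.mk (Ideal.span {π})) ≠ 0) (n : ℕ) :
    ((box Fq n).filter (fun y => π ∣ h.eval y)).card ≤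
      h.natDegree * Fintype.card Fq ^ (n - π.natDegree) := by
  have : (Ideal.span {π}).IsPrime := (Ideal.span_singleton_prime hπ.ne_zero).mpr hπ.prime
  set hb := h.map (Ideal.Quotient.mk (Ideal.span {π})) with hhb
  have h1 : hb.roots.toFinset.card ≤ h.natDegree :=
    (Multiset.toFinset_card_le _).trans ((card_roots' hb).trans natDegree_map_le)
  rw [mul_comm]
  refine (Finset.card_le_mul_card_image_of_maps_to (f := Ideal.Quotient.mk (Ideal.span {π}))
    (t := hb.roots.toFinset) ?_ (Fintype.card Fq ^ (n - π.natDegree)) ?_).trans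
    (Nat.mul_le_mul_left _ h1)
  · intro y hy
    rw [Finset.mem_filter] at hy
    rw [Multiset.mem_toFinset, mem_roots hh, IsRoot.def, hhb, eval_map,
      Polynomial.eval₂_at_apply, Ideal.Quotient.eq_zero_iff_mem, Ideal.mem_span_singleton]
    exact hy.2
  · intro b _
    rcases Finset.eq_empty_or_nonempty
      (((box Fq n).filter (fun y => π ∣ h.eval y)).filter
        (fun y => Ideal.Quotient.mk (Ideal.span {π}) y = b)) with he | ⟨y0, hy0⟩
    · rw [he]; simp
    · rw [Finset.mem_filter, Finset.mem_filter] at hy0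
      refine le_trans (Finset.card_le_card (t := (box Fq (n - π.natDegree)).image
        (fun z => y0 + π * z)) ?_) (Finset.card_image_le.trans (card_box _).le)
      intro y hy
      rw [Finset.mem_filter, Finset.mem_filter] at hy
      have h3 : π ∣ y - y0 := by
        rw [← Ideal.mem_span_singleton, ← Ideal.Quotient.mk_eq_mk_iff_sub_mem, hy.2, hy0.2]
      obtain ⟨z, hz⟩ := h3
      rw [Finset.mem_image]
      refine ⟨z, ?_, by rw [← hz]; ring⟩
      rw [mem_box]
      by_cases hz0 : z = 0
      · simp [hz0]
      have h4 : (y - y0).degree < n :=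
        lt_of_le_of_lt (degree_sub_le _ _) (max_lt (mem_box.mp hy.1.1) (mem_box.mp hy0.1.1))
      rw [hz, degree_mul, degree_eq_natDegree hz0, degree_eq_natDegree hπ.ne_zero] at h4
      rw [degree_eq_natDegree hz0]
      have h5 : π.natDegree + z.natDegree < n := by exact_mod_cast h4
      exact_mod_cast (by omega : z.natDegree < n - π.natDegree)

end Counting
end SqSieve

namespace SqSieve
section Prelim
variable {Fq : Type} [Field Fq] [Fintype Fq]

lemma growth {σ : Type} (R : MvPolynomial σ Fq[X]) : ∃ K : ℕ, ∀ (n : ℕ) (y : σ → Fq[X]),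
    (∀ i, (y i).natDegree ≤ n) → (MvPolynomial.eval y R).natDegree ≤ K * (n + 1) := by
  induction R using MvPolynomial.induction_on with
  | C a =>
    refine ⟨a.natDegree, fun n y _ => ?_⟩
    rw [MvPolynomial.eval_C]
    exact Nat.le_mul_of_pos_right _ (by omega)
  | add f g hf hg =>
    obtain ⟨K1, h1⟩ := hf
    obtain ⟨K2, h2⟩ := hg
    refine ⟨K1 + K2, fun n y hy => ?_⟩
    rw [map_add]
    refine (natDegree_add_le _ _).trans (max_le ?_ ?_)
    · exact (h1 n y hy).trans (Nat.mul_le_mul_right _ (by omega))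
    · exact (h2 n y hy).trans (Nat.mul_le_mul_right _ (by omega))
  | mul_X f i hf =>
    obtain ⟨K1, h1⟩ := hf
    refine ⟨K1 + 1, fun n y hy => ?_⟩
    rw [map_mul, MvPolynomial.eval_X]
    refine natDegree_mul_le.trans ?_
    have := h1 n y hy
    have := hy i
    nlinarith

lemma coprime_of_ne {a b : Fq[X]} (ha : a.Monic) (ha' : Irreducible a) (hb : b.Monic)
    (hb' : Irreducible b) (hab : a ≠ b) : IsCoprime a b := by
  rw [ha'.coprime_iff_not_dvd]
  intro h
  exact hab (eq_of_monic_of_associated ha hb (ha'.associated_of_dvd hb' h))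

lemma few_big (r : Fq[X]) (hr : r ≠ 0) (K n : ℕ) (hn : 1 ≤ n) (hK : r.natDegree ≤ K * (n + 1))
    (S : Finset Fq[X])
    (hS : ∀ π ∈ S, π.Monic ∧ Irreducible π ∧ n ≤ π.natDegree ∧ π ∣ r) : S.card ≤ 2 * K := by
  have h1 : (∏ π ∈ S, π) ∣ r := by
    refine Finset.prod_dvd_of_coprime ?_ (fun π hπ => (hS π hπ).2.2.2)
    intro a ha b hb hab
    exact coprime_of_ne (hS a ha).1 (hS a ha).2.1 (hS b hb).1 (hS b hb).2.1 hab
  have h2 := natDegree_le_of_dvd h1 hr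
  rw [natDegree_prod _ _ (fun π hπ => (hS π hπ).2.1.ne_zero)] at h2
  have h3 : S.card • n ≤ ∑ π ∈ S, π.natDegree :=
    Finset.card_nsmul_le_sum _ _ _ (fun π hπ => (hS π hπ).2.2.1)
  rw [smul_eq_mul] at h3
  have h4 : S.card * n ≤ (2 * K) * n := by nlinarith
  exact Nat.le_of_mul_le_mul_right h4 hn

lemma card_monic_le (S : Finset Fq[X]) (k : ℕ) (hS : ∀ π ∈ S, π.Monic ∧ π.natDegree = k) :
    S.card ≤ Fintype.card Fq ^ k := by
  rw [← card_box]
  refine Finset.card_le_card_of_injOn (fun π => π - X ^ k) ?_ ?_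
  · intro π hπ
    obtain ⟨h1, h2⟩ := hS π hπ
    refine mem_box.mpr ?_
    have : (π - X ^ k).degree < π.degree := by
      refine degree_sub_lt_left ?_ h1.ne_zero ?_
      · rw [degree_X_pow, degree_eq_natDegree h1.ne_zero, h2]
      · rw [h1.leadingCoeff, leadingCoeff_X_pow]
    rwa [degree_eq_natDegree h1.ne_zero, h2] at this
  · intro a _ b _ hab
    exact sub_left_injective hab

open Classical in
lemma sum_monic_le (S : Finset Fq[X]) (M n : ℕ)
    (hS : ∀ π ∈ S, π.Monic ∧ M ≤ π.natDegree ∧ π.natDegree < n) :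
    ∑ π ∈ S, ((Fintype.card Fq : ℝ)⁻¹) ^ (2 * π.natDegree) ≤ 2 * (1 / 2 : ℝ) ^ M := by
  have hq : (2 : ℝ) ≤ Fintype.card Fq := by
    exact_mod_cast Fintype.one_lt_card (α := Fq)
  have hmaps : ∀ π ∈ S, π.natDegree ∈ Finset.Ico M n := fun π hπ => by
    rw [Finset.mem_Ico]; exact (hS π hπ).2
  rw [← Finset.sum_fiberwise_of_maps_to hmaps]
  have h1 : ∀ k ∈ Finset.Ico M n, (∑ π ∈ S with π.natDegree = k,
      ((Fintype.card Fq : ℝ)⁻¹) ^ (2 * π.natDegree)) ≤ (1 / 2 : ℝ) ^ k := by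
    intro k _
    have h2 : (∑ π ∈ S with π.natDegree = k, ((Fintype.card Fq : ℝ)⁻¹) ^ (2 * π.natDegree)) =
        ∑ π ∈ S with π.natDegree = k, ((Fintype.card Fq : ℝ)⁻¹) ^ (2 * k) := by
      refine Finset.sum_congr rfl fun π hπ => ?_
      rw [(Finset.mem_filter.mp hπ).2]
    rw [h2, Finset.sum_const, nsmul_eq_mul]
    have h3 := card_monic_le (S.filter fun π => π.natDegree = k) k (fun π hπ => by
      rw [Finset.mem_filter] at hπ
      exact ⟨(hS π hπ.1).1, hπ.2⟩)
    have h4 : ((S.filter fun π => π.natDegree = k).card : ℝ) ≤ (Fintype.card Fq : ℝ) ^ k := by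
      exact_mod_cast h3
    calc _ ≤ (Fintype.card Fq : ℝ) ^ k * ((Fintype.card Fq : ℝ)⁻¹) ^ (2 * k) := by gcongr
      _ = ((Fintype.card Fq : ℝ)⁻¹) ^ k := by
        rw [two_mul, pow_add, ← mul_assoc, ← mul_pow, mul_inv_cancel₀ (by positivity), one_pow,
          one_mul]
      _ ≤ _ := by
        rw [one_div]; gcongr
  refine (Finset.sum_le_sum h1).trans ?_
  have := geom_sum_Ico_le_of_lt_one (x := (1 / 2 : ℝ)) (m := M) (n := n) (by norm_num) (by norm_num)
  refine this.trans (le_of_eq ?_)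
  ring

lemma map_mk_ne_zero {σ : Type} (R : MvPolynomial σ Fq[X]) (hR : R ≠ 0) :
    ∃ M : ℕ, ∀ π : Fq[X], M ≤ π.natDegree →
      MvPolynomial.map (Ideal.Quotient.mk (Ideal.span {π})) R ≠ 0 := by
  obtain ⟨s, hs⟩ := MvPolynomial.ne_zero_iff.mp hR
  refine ⟨(R.coeff s).natDegree + 1, fun π hπ h0 => ?_⟩
  have h1 := congrArg (MvPolynomial.coeff s) h0
  rw [MvPolynomial.coeff_map, MvPolynomial.coeff_zero, Ideal.Quotient.eq_zero_iff_mem,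
    Ideal.mem_span_singleton] at h1
  have := natDegree_le_of_dvd h1 hs
  omega

end Prelim
end SqSieve

namespace SqSieve
section Ekedahl
variable {Fq : Type} [Field Fq] [Fintype Fq]

/-- A point at which all members of `F` share a prime factor of degree at least `M`. -/
def Bad {N : ℕ} (e : ℕ) (F : Finset (MvPolynomial (Fin N) Fq[X])) (M : ℕ)
    (y : Fin N → Fq[X]) : Prop :=
  ∃ π : Fq[X], π.Monic ∧ Irreducible π ∧ M ≤ π.natDegree ∧
    ∀ f ∈ F, π ∣ MvPolynomial.eval (fun i => y i ^ e) f

open Classical in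
/-- All coefficients with respect to the first variable. -/
noncomputable def coeffSet {N : ℕ} (F : Finset (MvPolynomial (Fin (N + 1)) Fq[X])) :
    Finset (MvPolynomial (Fin N) Fq[X]) :=
  F.biUnion fun f => (MvPolynomial.finSuccEquiv Fq[X] N f).coeffs

lemma finSucc_C {N : ℕ} (a : Fq[X]) :
    MvPolynomial.finSuccEquiv Fq[X] N (MvPolynomial.C a) = C (MvPolynomial.C a) :=
  (MvPolynomial.finSuccEquiv Fq[X] N).commutes a

lemma eval_cons_pow {N : ℕ} (e : ℕ) (f : MvPolynomial (Fin (N + 1)) Fq[X]) (y0 : Fq[X])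
    (y : Fin N → Fq[X]) :
    MvPolynomial.eval (fun i => (Fin.cons y0 y : Fin (N + 1) → Fq[X]) i ^ e) f =
      ((MvPolynomial.finSuccEquiv Fq[X] N f).map
        (MvPolynomial.eval (fun i => y i ^ e))).eval (y0 ^ e) := by
  rw [← MvPolynomial.eval_eq_eval_mv_eval']
  congr 2
  funext i
  refine Fin.cases ?_ (fun j => ?_) i <;> simp

open Classical in
lemma coeffSet_dvd {N : ℕ} (F : Finset (MvPolynomial (Fin (N + 1)) Fq[X]))
    (hF : ∀ g, (∀ f ∈ F, g ∣ f) → ∃ a, g = MvPolynomial.C a)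
    (g : MvPolynomial (Fin N) Fq[X]) (hg : ∀ f ∈ coeffSet F, g ∣ f) :
    ∃ a, g = MvPolynomial.C a := by
  obtain ⟨a, ha⟩ := hF ((MvPolynomial.finSuccEquiv Fq[X] N).symm (C g)) (by
    intro f hf
    rw [← map_dvd_iff (MvPolynomial.finSuccEquiv Fq[X] N), AlgEquiv.apply_symm_apply,
      Polynomial.C_dvd_iff_dvd_coeff]
    intro i
    by_cases h0 : (MvPolynomial.finSuccEquiv Fq[X] N f).coeff i = 0
    · rw [h0]; exact dvd_zero _
    · refine hg _ ?_
      rw [coeffSet, Finset.mem_biUnion]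
      exact ⟨f, hf, Polynomial.coeff_mem_coeffs h0⟩)
  rw [AlgEquiv.symm_apply_eq, finSucc_C] at ha
  exact ⟨a, C_injective ha⟩

open Classical in
lemma coeffSet_ne {N : ℕ} (F : Finset (MvPolynomial (Fin (N + 1)) Fq[X]))
    (hF : ∃ f ∈ F, f ≠ 0) : ∃ f ∈ coeffSet F, f ≠ 0 := by
  obtain ⟨f, hf, hf0⟩ := hF
  have h1 : MvPolynomial.finSuccEquiv Fq[X] N f ≠ 0 := by
    rwa [Ne, EmbeddingLike.map_eq_zero_iff]
  obtain ⟨i, hi⟩ : ∃ i, (MvPolynomial.finSuccEquiv Fq[X] N f).coeff i ≠ 0 := by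
    by_contra! h
    exact h1 (Polynomial.ext (by simpa using h))
  refine ⟨_, ?_, hi⟩
  rw [coeffSet, Finset.mem_biUnion]
  exact ⟨f, hf, Polynomial.coeff_mem_coeffs hi⟩

lemma exists_R {N : ℕ} (F : Finset (MvPolynomial (Fin (N + 1)) Fq[X]))
    (hF : ∀ g, (∀ f ∈ F, g ∣ f) → ∃ a, g = MvPolynomial.C a) :
    ∃ R : MvPolynomial (Fin N) Fq[X], R ≠ 0 ∧ ∀ (e : ℕ) (π y0 : Fq[X]) (y : Fin N → Fq[X]),
      (∀ f ∈ F, π ∣ MvPolynomial.eval (fun i => (Fin.cons y0 y : Fin (N + 1) → Fq[X]) i ^ e) f) →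
      π ∣ MvPolynomial.eval (fun i => y i ^ e) R := by
  obtain ⟨R, hR, hR2⟩ := exists_elim (B := MvPolynomial (Fin N) Fq[X])
    (MvPolynomial.finSuccEquiv Fq[X] N '' (F : Set _)) (by
      intro g hg
      obtain ⟨a, ha⟩ := hF ((MvPolynomial.finSuccEquiv Fq[X] N).symm g) (by
        intro f hf
        rw [← map_dvd_iff (MvPolynomial.finSuccEquiv Fq[X] N), AlgEquiv.apply_symm_apply]
        exact hg _ ⟨f, hf, rfl⟩)
      rw [AlgEquiv.symm_apply_eq, finSucc_C] at ha
      rw [ha, natDegree_C])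
  refine ⟨R, hR, fun e π y0 y h => ?_⟩
  have h1 : Ideal.span (MvPolynomial.finSuccEquiv Fq[X] N '' (F : Set _)) ≤
      (Ideal.span {π}).comap ((evalRingHom (y0 ^ e)).comp
        (mapRingHom (MvPolynomial.eval (fun i => y i ^ e)))) := by
    rw [Ideal.span_le]
    rintro _ ⟨f, hf, rfl⟩
    have := h f hf
    rw [eval_cons_pow] at this
    rw [SetLike.mem_coe, Ideal.mem_comap, Ideal.mem_span_singleton]
    simpa using this
  have h2 := h1 hR2
  rw [Ideal.mem_comap, Ideal.mem_span_singleton] at h2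
  simpa using h2

open Classical in
lemma fiber_one {N : ℕ} (e : ℕ) (he : 0 < e) (F : Finset (MvPolynomial (Fin (N + 1)) Fq[X]))
    (K : ℕ) (hK : ∀ f ∈ F, (MvPolynomial.finSuccEquiv Fq[X] N f).natDegree * e ≤ K)
    (M n : ℕ) (y : Fin N → Fq[X]) (hy : ¬ Bad e (coeffSet F) M y)
    (π : Fq[X]) (hm : π.Monic) (hi : Irreducible π) (hM : M ≤ π.natDegree) :
    ((box Fq n).filter fun y0 => ∀ f ∈ F,
      π ∣ MvPolynomial.eval (fun i => (Fin.cons y0 y : Fin (N + 1) → Fq[X]) i ^ e) f).card ≤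
      K * Fintype.card Fq ^ (n - π.natDegree) := by
  have h1 : ∃ g ∈ coeffSet F, ¬ π ∣ MvPolynomial.eval (fun i => y i ^ e) g := by
    by_contra! h
    exact hy ⟨π, hm, hi, hM, h⟩
  obtain ⟨g, hg, hg2⟩ := h1
  rw [coeffSet, Finset.mem_biUnion] at hg
  obtain ⟨f, hf, hgf⟩ := hg
  obtain ⟨j, _, rfl⟩ := Polynomial.mem_coeffs_iff.mp hgf
  set h := (MvPolynomial.finSuccEquiv Fq[X] N f).map (MvPolynomial.eval (fun i => y i ^ e)) with hh
  have h2 : (expand Fq[X] e h).map (Ideal.Quotient.mk (Ideal.span {π})) ≠ 0 := by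
    rw [map_expand, Ne, expand_eq_zero he]
    intro h0
    have := congrArg (fun u => coeff u j) h0
    simp only [coeff_map, coeff_zero, hh] at this
    rw [Ideal.Quotient.eq_zero_iff_mem, Ideal.mem_span_singleton] at this
    exact hg2 this
  have h3 := one_var (expand Fq[X] e h) π hi h2 n
  refine le_trans (Finset.card_le_card ?_) (h3.trans (Nat.mul_le_mul_right _ ?_))
  · intro y0 hy0
    rw [Finset.mem_filter] at hy0 ⊢
    refine ⟨hy0.1, ?_⟩
    have := hy0.2 f hf
    rw [eval_cons_pow] at this
    rwa [expand_eval]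
  · rw [natDegree_expand]
    exact (Nat.mul_le_mul_right _ natDegree_map_le).trans (hK f hf)

open Classical in
/-- Monic irreducibles with degree in `[M, n)`. -/
noncomputable def primes (Fq : Type) [Field Fq] [Fintype Fq] (M n : ℕ) : Finset Fq[X] :=
  (box Fq n).filter fun π => π.Monic ∧ Irreducible π ∧ M ≤ π.natDegree

lemma mem_primes {M n : ℕ} {π : Fq[X]} : π ∈ primes Fq M n ↔
    π.Monic ∧ Irreducible π ∧ M ≤ π.natDegree ∧ π.natDegree < n := by
  classical
  rw [primes, Finset.mem_filter, mem_box]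
  constructor
  · rintro ⟨h1, h2, h3, h4⟩
    refine ⟨h2, h3, h4, ?_⟩
    rw [degree_eq_natDegree h2.ne_zero] at h1
    exact_mod_cast h1
  · rintro ⟨h2, h3, h4, h1⟩
    refine ⟨?_, h2, h3, h4⟩
    rw [degree_eq_natDegree h2.ne_zero]
    exact_mod_cast h1

open Classical in
lemma fiber_bound {N : ℕ} (e : ℕ) (he : 0 < e) (F : Finset (MvPolynomial (Fin (N + 1)) Fq[X]))
    (K : ℕ) (hK : ∀ f ∈ F, (MvPolynomial.finSuccEquiv Fq[X] N f).natDegree * e ≤ K)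
    (M n : ℕ) (hn : 1 ≤ n) (y : Fin N → Fq[X]) (hy : ¬ Bad e (coeffSet F) M y)
    (r : Fq[X]) (hr : r ≠ 0)
    (hr2 : ∀ π y0 : Fq[X], (∀ f ∈ F,
      π ∣ MvPolynomial.eval (fun i => (Fin.cons y0 y : Fin (N + 1) → Fq[X]) i ^ e) f) → π ∣ r)
    (L : ℕ) (hL : r.natDegree ≤ L * (n + 1)) :
    ((box Fq n).filter fun y0 => Bad e F M (Fin.cons y0 y)).card ≤
      2 * L * K + ∑ π ∈ primes Fq M n,
        if π ∣ r then K * Fintype.card Fq ^ (n - π.natDegree) else 0 := by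
  set G : Fq[X] → Finset Fq[X] := fun π => (box Fq n).filter fun y0 => ∀ f ∈ F,
      π ∣ MvPolynomial.eval (fun i => (Fin.cons y0 y : Fin (N + 1) → Fq[X]) i ^ e) f with hG
  set S1 := (primes Fq M n).filter fun π => π ∣ r with hS1
  set S2 := (box Fq (r.natDegree + 1)).filter fun π =>
    π.Monic ∧ Irreducible π ∧ M ≤ π.natDegree ∧ n ≤ π.natDegree ∧ π ∣ r with hS2
  have hsub : ((box Fq n).filter fun y0 => Bad e F M (Fin.cons y0 y)) ⊆
      S2.biUnion G ∪ S1.biUnion G := by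
    intro y0 hy0
    rw [Finset.mem_filter] at hy0
    obtain ⟨hb, π, h1, h2, h3, h4⟩ := hy0
    have h5 := hr2 π y0 h4
    rw [Finset.mem_union, Finset.mem_biUnion, Finset.mem_biUnion]
    have h6 : y0 ∈ G π := by rw [hG]; exact Finset.mem_filter.mpr ⟨hb, h4⟩
    rcases lt_or_ge π.natDegree n with h7 | h7
    · right
      refine ⟨π, ?_, h6⟩
      rw [hS1, Finset.mem_filter, mem_primes]
      exact ⟨⟨h1, h2, h3, h7⟩, h5⟩
    · left
      refine ⟨π, ?_, h6⟩
      rw [hS2, Finset.mem_filter, mem_box]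
      refine ⟨?_, h1, h2, h3, h7, h5⟩
      rw [degree_eq_natDegree h1.ne_zero]
      exact_mod_cast Nat.lt_succ_of_le (natDegree_le_of_dvd h5 hr)
  refine (Finset.card_le_card hsub).trans ((Finset.card_union_le _ _).trans (add_le_add ?_ ?_))
  · refine Finset.card_biUnion_le.trans ?_
    have hc : S2.card ≤ 2 * L := few_big r hr L n hn hL S2 (by
      intro π hπ
      rw [hS2, Finset.mem_filter] at hπ
      exact ⟨hπ.2.1, hπ.2.2.1, hπ.2.2.2.2.1, hπ.2.2.2.2.2⟩)
    refine (Finset.sum_le_card_nsmul S2 _ K ?_).trans ?_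
    · intro π hπ
      rw [hS2, Finset.mem_filter] at hπ
      have := fiber_one e he F K hK M n y hy π hπ.2.1 hπ.2.2.1 hπ.2.2.2.1
      rwa [Nat.sub_eq_zero_of_le hπ.2.2.2.2.1, pow_zero, mul_one] at this
    · rw [smul_eq_mul]
      exact Nat.mul_le_mul_right _ hc
  · rw [← Finset.sum_filter]
    refine Finset.card_biUnion_le.trans (Finset.sum_le_sum ?_)
    intro π hπ
    rw [Finset.mem_filter, mem_primes] at hπ
    exact fiber_one e he F K hK M n y hy π hπ.1.1 hπ.1.2.1 hπ.1.2.2.1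

end Ekedahl
end SqSieve

namespace SqSieve
section Ekedahl2
variable {Fq : Type} [Field Fq] [Fintype Fq]

open Classical in
lemma card_fiber {N : ℕ} (n : ℕ) (p : (Fin (N + 1) → Fq[X]) → Prop) :
    ((Fintype.piFinset fun _ : Fin (N + 1) => box Fq n).filter p).card ≤
      ∑ y ∈ Fintype.piFinset fun _ : Fin N => box Fq n,
        ((box Fq n).filter fun y0 => p (Fin.cons y0 y)).card := by
  rw [Finset.card_eq_sum_card_fiberwise (f := Fin.tail)
    (t := Fintype.piFinset fun _ : Fin N => box Fq n)]
  · refine Finset.sum_le_sum fun y _ => ?_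
    refine Finset.card_le_card_of_injOn (fun z => z 0) ?_ ?_
    · intro z hz
      rw [Finset.mem_coe, Finset.mem_filter, Finset.mem_filter, Fintype.mem_piFinset] at hz
      rw [Finset.mem_coe, Finset.mem_filter]
      refine ⟨hz.1.1 0, ?_⟩
      rw [← hz.2, Fin.cons_self_tail]
      exact hz.1.2
    · intro z hz w hw h
      rw [Finset.mem_coe, Finset.mem_filter] at hz hw
      rw [← Fin.cons_self_tail z, ← Fin.cons_self_tail w, hz.2, hw.2]
      simp only at h
      rw [h]
  · intro z hz
    rw [Finset.mem_coe, Finset.mem_filter, Fintype.mem_piFinset] at hz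
    rw [Finset.mem_coe, Fintype.mem_piFinset]
    intro i
    exact hz.1 i.succ

lemma card_pi_box (n N : ℕ) : (Fintype.piFinset fun _ : Fin N => box Fq n).card =
    Fintype.card Fq ^ (n * N) := by
  rw [Fintype.card_piFinset]
  simp [card_box, pow_mul]

open Classical in
lemma total_bound {N : ℕ} (e : ℕ) (he : 0 < e) (F : Finset (MvPolynomial (Fin (N + 1)) Fq[X]))
    (K : ℕ) (hK : ∀ f ∈ F, (MvPolynomial.finSuccEquiv Fq[X] N f).natDegree * e ≤ K)
    (R : MvPolynomial (Fin N) Fq[X])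
    (hR2 : ∀ (π y0 : Fq[X]) (y : Fin N → Fq[X]), (∀ f ∈ F,
      π ∣ MvPolynomial.eval (fun i => (Fin.cons y0 y : Fin (N + 1) → Fq[X]) i ^ e) f) →
      π ∣ MvPolynomial.eval y R)
    (L : ℕ) (hL : ∀ (n : ℕ) (y : Fin N → Fq[X]), (∀ i, (y i).natDegree ≤ n) →
      (MvPolynomial.eval y R).natDegree ≤ L * (n + 1))
    (M n : ℕ) (hn : 1 ≤ n) :
    ((Fintype.piFinset fun _ : Fin (N + 1) => box Fq n).filter (Bad e F M)).card ≤
      ((Fintype.piFinset fun _ : Fin N => box Fq n).filter (Bad e (coeffSet F) M)).card *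
        Fintype.card Fq ^ n +
      ((Fintype.piFinset fun _ : Fin N => box Fq n).filter
        (fun y => MvPolynomial.eval y R = 0)).card * Fintype.card Fq ^ n +
      2 * L * K * Fintype.card Fq ^ (n * N) +
      ∑ π ∈ primes Fq M n, ((Fintype.piFinset fun _ : Fin N => box Fq n).filter
        (fun y => π ∣ MvPolynomial.eval y R)).card * (K * Fintype.card Fq ^ (n - π.natDegree)) := by
  refine (card_fiber n _).trans ?_
  have h1 : ∀ y ∈ Fintype.piFinset fun _ : Fin N => box Fq n,
      ((box Fq n).filter fun y0 => Bad e F M (Fin.cons y0 y)).card ≤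
      (if Bad e (coeffSet F) M y then Fintype.card Fq ^ n else 0) +
      (if MvPolynomial.eval y R = 0 then Fintype.card Fq ^ n else 0) +
      2 * L * K + ∑ π ∈ primes Fq M n,
        if π ∣ MvPolynomial.eval y R then K * Fintype.card Fq ^ (n - π.natDegree) else 0 := by
    intro y hy
    have htriv : ((box Fq n).filter fun y0 => Bad e F M (Fin.cons y0 y)).card ≤
        Fintype.card Fq ^ n := (Finset.card_filter_le _ _).trans (card_box n).le
    by_cases hb : Bad e (coeffSet F) M y
    · rw [if_pos hb]; omega
    by_cases h0 : MvPolynomial.eval y R = 0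
    · rw [if_pos h0]; omega
    rw [if_neg hb, if_neg h0, zero_add, zero_add]
    refine fiber_bound e he F K hK M n hn y hb _ h0 (fun π y0 => hR2 π y0 y) L ?_
    refine hL n y fun i => ?_
    have := mem_box.mp (Fintype.mem_piFinset.mp hy i)
    exact natDegree_le_of_degree_le this.le
  refine (Finset.sum_le_sum h1).trans (le_of_eq ?_)
  rw [Finset.sum_add_distrib, Finset.sum_add_distrib, Finset.sum_add_distrib, Finset.sum_comm]
  simp only [← Finset.sum_filter, Finset.sum_const, smul_eq_mul, card_pi_box]
  rw [mul_comm (2 * L * K)]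

open Classical in
lemma ekedahl (e : ℕ) (he : 0 < e) (N : ℕ) : ∀ (F : Finset (MvPolynomial (Fin N) Fq[X]))
    (_ : ∀ g, (∀ f ∈ F, g ∣ f) → ∃ a, g = MvPolynomial.C a) (_ : ∃ f ∈ F, f ≠ 0)
    (ε : ℝ) (_ : 0 < ε), ∃ M n0 : ℕ, ∀ n ≥ n0,
    (((Fintype.piFinset fun _ : Fin N => box Fq n).filter (Bad e F M)).card : ℝ) ≤
      ε * (Fintype.card Fq : ℝ) ^ (n * N) := by
  induction N with
  | zero =>
    rintro F - ⟨f, hf, hf0⟩ ε hε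
    obtain ⟨a, rfl⟩ := MvPolynomial.C_surjective (Fin 0) f
    have ha : a ≠ 0 := by rintro rfl; simp at hf0
    refine ⟨a.natDegree + 1, 0, fun n _ => ?_⟩
    rw [Finset.filter_false_of_mem]
    · simp; positivity
    · rintro y - ⟨π, _, _, h3, h4⟩
      have := h4 _ hf
      rw [MvPolynomial.eval_C] at this
      have := natDegree_le_of_dvd this ha
      omega
  | succ N ih =>
    intro F hF hF0 ε hε
    obtain ⟨M1, n1, h1⟩ := ih (coeffSet F) (coeffSet_dvd F hF) (coeffSet_ne F hF0) (ε / 4)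
      (by positivity)
    obtain ⟨R0, hR0, hR2⟩ := exists_R F hF
    set R := MvPolynomial.expand e R0 with hR
    have hRne : R ≠ 0 := by
      intro h
      exact hR0 (MvPolynomial.expand_injective he (by rw [← hR, h, map_zero]))
    have hRe : ∀ y : Fin N → Fq[X], MvPolynomial.eval y R =
        MvPolynomial.eval (fun i => y i ^ e) R0 := fun y => MvPolynomial.eval_expand e y R0
    obtain ⟨L, hL⟩ := growth R
    obtain ⟨M2, hM2⟩ := map_mk_ne_zero R hRne
    set K := ∑ f ∈ F, (MvPolynomial.finSuccEquiv Fq[X] N f).natDegree * e with hKdef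
    have hK : ∀ f ∈ F, (MvPolynomial.finSuccEquiv Fq[X] N f).natDegree * e ≤ K := fun f hf =>
      Finset.single_le_sum (f := fun f => (MvPolynomial.finSuccEquiv Fq[X] N f).natDegree * e)
        (fun _ _ => Nat.zero_le _) hf
    set D := R.totalDegree with hD
    set q := Fintype.card Fq with hq
    have hq2 : (2 : ℝ) ≤ q := by exact_mod_cast Fintype.one_lt_card (α := Fq)
    have hlim : Tendsto (fun n : ℕ => (D + 2 * L * K : ℝ) * (1 / 2 : ℝ) ^ n) atTop (nhds 0) := by
      have := (tendsto_pow_atTop_nhds_zero_of_lt_one (r := (1 / 2 : ℝ)) (by norm_num)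
        (by norm_num)).const_mul (D + 2 * L * K : ℝ)
      simpa using this
    have hlim2 : Tendsto (fun n : ℕ => (K * D * 2 : ℝ) * (1 / 2 : ℝ) ^ n) atTop (nhds 0) := by
      have := (tendsto_pow_atTop_nhds_zero_of_lt_one (r := (1 / 2 : ℝ)) (by norm_num)
        (by norm_num)).const_mul (K * D * 2 : ℝ)
      simpa using this
    obtain ⟨n2, hn2⟩ := eventually_atTop.mp
      (hlim.eventually (gt_mem_nhds (by positivity : (0 : ℝ) < ε / 4)))
    obtain ⟨M3, hM3⟩ := eventually_atTop.mp
      (hlim2.eventually (gt_mem_nhds (by positivity : (0 : ℝ) < ε / 4)))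
    refine ⟨max M1 (max M2 M3), max n1 (max n2 1), fun n hn => ?_⟩
    set M := max M1 (max M2 M3) with hM
    have hMM1 : M1 ≤ M := le_max_left _ _
    have hMM2 : M2 ≤ M := (le_max_left _ _).trans (le_max_right _ _)
    have hMM3 : M3 ≤ M := (le_max_right _ _).trans (le_max_right _ _)
    have hnn1 : n1 ≤ n := (le_max_left _ _).trans hn
    have hnn2 : n2 ≤ n := ((le_max_left _ _).trans (le_max_right _ _)).trans hn
    have hnn3 : 1 ≤ n := ((le_max_right _ _).trans (le_max_right _ _)).trans hn
    have hT := total_bound e he F K hK R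
      (fun π y0 y h => by rw [hRe]; exact hR2 e π y0 y h) L hL M n hnn3
    have hT' := (Nat.cast_le (α := ℝ)).mpr hT
    push_cast at hT'
    refine hT'.trans ?_
    have hqpos : (0 : ℝ) < q := by linarith
    have e1 : (((Fintype.piFinset fun _ : Fin N => box Fq n).filter
        (Bad e (coeffSet F) M)).card : ℝ) * (q : ℝ) ^ n ≤ ε / 4 * (q : ℝ) ^ (n * (N + 1)) := by
      have : (((Fintype.piFinset fun _ : Fin N => box Fq n).filter
        (Bad e (coeffSet F) M)).card : ℝ) ≤ ((Fintype.piFinset fun _ : Fin N => box Fq n).filter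
        (Bad e (coeffSet F) M1)).card := by
        refine Nat.cast_le.mpr (Finset.card_le_card ?_)
        intro y hy
        rw [Finset.mem_filter] at hy ⊢
        obtain ⟨hy1, π, a1, a2, a3, a4⟩ := hy
        exact ⟨hy1, π, a1, a2, hMM1.trans a3, a4⟩
      calc _ ≤ (ε / 4 * (q : ℝ) ^ (n * N)) * (q : ℝ) ^ n := by
            gcongr
            exact this.trans (h1 n hnn1)
        _ = _ := by ring
    have e2 : (((Fintype.piFinset fun _ : Fin N => box Fq n).filter
        (fun y => MvPolynomial.eval y R = 0)).card : ℝ) * (q : ℝ) ^ n ≤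
        D * (q : ℝ) ^ (n * N) := by
      exact_mod_cast sz_box R hRne n
    have e3 : D * (q : ℝ) ^ (n * N) + 2 * L * K * (q : ℝ) ^ (n * N) ≤
        ε / 4 * (q : ℝ) ^ (n * (N + 1)) := by
      have h3 : (D + 2 * L * K : ℝ) ≤ ε / 4 * (q : ℝ) ^ n := by
        have h4 := (hn2 n hnn2).le
        have h5 : (1 / 2 : ℝ) ^ n * 2 ^ n = 1 := by rw [← mul_pow]; norm_num
        have h6 : (2 : ℝ) ^ n ≤ (q : ℝ) ^ n := by gcongr
        calc (D + 2 * L * K : ℝ) = (D + 2 * L * K : ℝ) * (1 / 2 : ℝ) ^ n * 2 ^ n := by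
              rw [mul_assoc (D + 2 * L * K : ℝ), h5, mul_one]
          _ ≤ ε / 4 * 2 ^ n := by gcongr
          _ ≤ _ := by gcongr
      calc _ = (D + 2 * L * K : ℝ) * (q : ℝ) ^ (n * N) := by ring
        _ ≤ (ε / 4 * (q : ℝ) ^ n) * (q : ℝ) ^ (n * N) := by gcongr
        _ = _ := by ring
    have e4 : ∑ π ∈ primes Fq M n, (((Fintype.piFinset fun _ : Fin N => box Fq n).filter
        (fun y => π ∣ MvPolynomial.eval y R)).card : ℝ) * (K * (q : ℝ) ^ (n - π.natDegree)) ≤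
        ε / 4 * (q : ℝ) ^ (n * (N + 1)) := by
      have h3 : ∀ π ∈ primes Fq M n, (((Fintype.piFinset fun _ : Fin N => box Fq n).filter
          (fun y => π ∣ MvPolynomial.eval y R)).card : ℝ) * (K * (q : ℝ) ^ (n - π.natDegree)) ≤
          K * D * (q : ℝ) ^ (n * (N + 1)) * ((q : ℝ)⁻¹) ^ (2 * π.natDegree) := by
        intro π hπ
        rw [mem_primes] at hπ
        obtain ⟨a1, a2, a3, a4⟩ := hπ
        have h4 : (((Fintype.piFinset fun _ : Fin N => box Fq n).filter
          (fun y => π ∣ MvPolynomial.eval y R)).card : ℝ) * (q : ℝ) ^ π.natDegree ≤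
          D * (q : ℝ) ^ (n * N) := by
          exact_mod_cast sz_mod R π a2 (hM2 π (hMM2.trans a3)) n a4.le
        have h5 : (q : ℝ) ^ (n - π.natDegree) * (q : ℝ) ^ π.natDegree = (q : ℝ) ^ n := by
          rw [← pow_add, Nat.sub_add_cancel a4.le]
        have h6 : ((q : ℝ)⁻¹) ^ (2 * π.natDegree) =
            (((q : ℝ) ^ π.natDegree) * (q : ℝ) ^ π.natDegree)⁻¹ := by
          rw [inv_pow, two_mul, pow_add]
        rw [h6, ← div_eq_mul_inv, le_div_iff₀ (by positivity)]
        calc _ = K * ((((Fintype.piFinset fun _ : Fin N => box Fq n).filter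
              (fun y => π ∣ MvPolynomial.eval y R)).card : ℝ) * (q : ℝ) ^ π.natDegree) *
              ((q : ℝ) ^ (n - π.natDegree) * (q : ℝ) ^ π.natDegree) := by ring
          _ ≤ K * (D * (q : ℝ) ^ (n * N)) * (q : ℝ) ^ n := by rw [h5]; gcongr
          _ = _ := by ring
      refine (Finset.sum_le_sum h3).trans ?_
      rw [← Finset.mul_sum]
      have h7 := sum_monic_le (primes Fq M n) M n (fun π hπ => by
        rw [mem_primes] at hπ
        exact ⟨hπ.1, hπ.2.2.1, hπ.2.2.2⟩)
      calc _ ≤ K * D * (q : ℝ) ^ (n * (N + 1)) * (2 * (1 / 2 : ℝ) ^ M) := by gcongr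
        _ = (K * D * 2 * (1 / 2 : ℝ) ^ M) * (q : ℝ) ^ (n * (N + 1)) := by ring
        _ ≤ _ := by
          gcongr
          exact (hM3 M hMM3).le
    have e5 : 0 ≤ ε / 4 * (q : ℝ) ^ (n * (N + 1)) := by positivity
    linarith

end Ekedahl2
end SqSieve

namespace SqSieve
section Transfer
variable {Fq : Type} [Field Fq] [Fintype Fq]

lemma dvd_derivative_of_sq_dvd (π g : Fq[X]) (h : π ^ 2 ∣ g) : π ∣ derivative g := by
  obtain ⟨a, rfl⟩ := h
  rw [derivative_mul, derivative_pow]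
  exact ⟨C ((2 : ℕ) : Fq) * derivative π * a + π * derivative a, by simp; ring⟩

open Classical in
lemma tail_bound (k : ℕ) [Fact (k + 2).Prime] [CharP Fq (k + 2)] (m : ℕ) (hm : 1 ≤ m)
    (f : MvPolynomial (Fin m) Fq[X])
    (hsqf : Squarefree (MvPolynomial.map (algebraMap Fq[X] (RatFunc Fq)) f))
    (ε : ℝ) (hε : 0 < ε) : ∃ M n0 : ℕ, ∀ n ≥ n0,
    (((Fintype.piFinset fun _ : Fin m => box Fq n).filter (fun x => ∃ π : Fq[X], π.Monic ∧
      Irreducible π ∧ M ≤ π.natDegree ∧ π ^ 2 ∣ MvPolynomial.eval x f)).card : ℝ) ≤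
      ε * (Fintype.card Fq : ℝ) ^ (n * m) := by
  have hN : Fintype.card (Idx (Fin m) k) = m * (k + 2) := by
    simp [Idx]; ring
  let σ : Idx (Fin m) k ≃ Fin (m * (k + 2)) := Fintype.equivFinOfCardEq hN
  let ρ := MvPolynomial.renameEquiv Fq[X] σ
  have hconst := isConst_of_dvd_FF_GG k (k + 2) f hsqf
  have hq2 : (2 : ℝ) ≤ Fintype.card Fq := by exact_mod_cast Fintype.one_lt_card (α := Fq)
  obtain ⟨M, n0, hM⟩ := ekedahl (Fq := Fq) (k + 2) (by omega) (m * (k + 2))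
    {ρ (FF k f), ρ (GG k f)} (by
      intro g hg
      have h1 := hg (ρ (FF k f)) (by simp)
      have h2 := hg (ρ (GG k f)) (by simp)
      obtain ⟨a, ha⟩ := hconst (ρ.symm g)
        (by rw [← map_dvd_iff ρ, AlgEquiv.apply_symm_apply]; exact h1)
        (by rw [← map_dvd_iff ρ, AlgEquiv.apply_symm_apply]; exact h2)
      rw [AlgEquiv.symm_apply_eq] at ha
      exact ⟨a, ha.trans (ρ.commutes a)⟩) (by
      by_contra! h
      have h1 : FF k f = 0 := by
        have := h (ρ (FF k f)) (by simp)
        rwa [EmbeddingLike.map_eq_zero_iff] at this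
      have h2 : GG k f = 0 := by
        have := h (ρ (GG k f)) (by simp)
        rwa [EmbeddingLike.map_eq_zero_iff] at this
      obtain ⟨a, ha⟩ := hconst (MvPolynomial.X (Sum.inr ⟨0, hm⟩)) (by rw [h1]; exact dvd_zero _)
        (by rw [h2]; exact dvd_zero _)
      have e1 := congrArg (MvPolynomial.eval (fun _ => (0 : Fq[X]))) ha
      have e2 := congrArg (MvPolynomial.eval (fun _ => (1 : Fq[X]))) ha
      rw [MvPolynomial.eval_X, MvPolynomial.eval_C] at e1 e2
      exact zero_ne_one (e1.trans e2.symm))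
    (ε / (Fintype.card Fq : ℝ) ^ ((k + 2) * m)) (by positivity)
  refine ⟨M, n0 * (k + 2), fun n hn => ?_⟩
  set n' := n / (k + 2) + 1 with hn'
  have hdm := Nat.div_add_mod n (k + 2)
  have hml := Nat.mod_lt n (show 0 < k + 2 by omega)
  have h1 : n ≤ n' * (k + 2) := by rw [hn']; nlinarith
  have h2 : n' * (k + 2) ≤ n + (k + 2) := by
    have := Nat.div_mul_le_self n (k + 2)
    rw [hn', add_mul, one_mul]; omega
  have h3 : n0 ≤ n' := by
    have : n0 ≤ n / (k + 2) := (Nat.le_div_iff_mul_le (by omega)).mpr hn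
    omega
  have h4 := hM n' h3
  have h5 : ((Fintype.piFinset fun _ : Fin m => box Fq n).filter (fun x => ∃ π : Fq[X], π.Monic ∧
      Irreducible π ∧ M ≤ π.natDegree ∧ π ^ 2 ∣ MvPolynomial.eval x f)).card ≤
      ((Fintype.piFinset fun _ : Fin (m * (k + 2)) => box Fq n').filter
        (Bad (k + 2) {ρ (FF k f), ρ (GG k f)} M)).card := by
    refine Finset.card_le_card_of_surjOn (fun y j => MvPolynomial.eval
      (fun i => y (σ i) ^ (k + 2)) (xx k j)) ?_
    intro x hx
    rw [Finset.mem_coe, Finset.mem_filter, Fintype.mem_piFinset] at hx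
    obtain ⟨hx1, π, a1, a2, a3, a4⟩ := hx
    obtain ⟨y, hy, hxy⟩ := exists_decomp' k n' x (fun j => by
      refine lt_of_lt_of_le (mem_box.mp (hx1 j)) ?_
      exact_mod_cast h1)
    have hxy' : (fun j => MvPolynomial.eval (fun i => y i ^ (k + 2)) (xx k j)) = x :=
      funext fun j => (hxy j).symm
    refine ⟨fun i => y (σ.symm i), ?_, ?_⟩
    · rw [Finset.mem_coe, Finset.mem_filter, Fintype.mem_piFinset]
      refine ⟨fun i => mem_box.mpr (hy _), π, a1, a2, a3, ?_⟩
      have hev : ∀ g : MvPolynomial (Idx (Fin m) k) Fq[X],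
          MvPolynomial.eval (fun i => y (σ.symm i) ^ (k + 2)) (ρ g) =
          MvPolynomial.eval (fun i => y i ^ (k + 2)) g := by
        intro g
        rw [MvPolynomial.renameEquiv_apply, MvPolynomial.eval_rename]
        congr 2
        funext i
        simp
      intro g hg
      rw [Finset.mem_insert, Finset.mem_singleton] at hg
      rcases hg with rfl | rfl
      · rw [hev, eval_FF, hxy']
        exact (dvd_pow_self π two_ne_zero).trans a4
      · rw [hev, eval_GG k f _ (fun i => derivative_pow_char (k + 2) (y i)), hxy']
        exact dvd_derivative_of_sq_dvd _ _ a4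
    · simp only [Equiv.symm_apply_apply]
      exact hxy'
  calc _ ≤ (((Fintype.piFinset fun _ : Fin (m * (k + 2)) => box Fq n').filter
        (Bad (k + 2) {ρ (FF k f), ρ (GG k f)} M)).card : ℝ) := by exact_mod_cast h5
    _ ≤ _ := h4
    _ ≤ (ε / (Fintype.card Fq : ℝ) ^ ((k + 2) * m)) *
        (Fintype.card Fq : ℝ) ^ ((k + 2) * m + n * m) := by
        gcongr
        · linarith
        · nlinarith
    _ = _ := by
        rw [pow_add]
        field_simp

end Transfer
end SqSieve

namespace SqSieve
section CRT
variable {Fq : Type} [Field Fq] [Fintype Fq]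

/-- Number of zeros modulo `π ^ 2`. -/
noncomputable def cc {m : ℕ} (f : MvPolynomial (Fin m) Fq[X]) (π : Fq[X]) : ℕ :=
  Nat.card {x : Fin m → Fq[X] ⧸ Ideal.span {π ^ 2} //
    MvPolynomial.eval x (MvPolynomial.map (Ideal.Quotient.mk (Ideal.span {π ^ 2})) f) = 0}

/-- The local factor. -/
noncomputable def fac {m : ℕ} (f : MvPolynomial (Fin m) Fq[X]) (π : Fq[X]) : ℝ :=
  1 - (cc f π : ℝ) / (Fintype.card Fq : ℝ) ^ (2 * m * π.natDegree)

lemma card_quot_tuples (m : ℕ) (π : Fq[X]) (hπ : π ≠ 0) :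
    Nat.card (Fin m → Fq[X] ⧸ Ideal.span {π ^ 2}) = Fintype.card Fq ^ (2 * m * π.natDegree) := by
  rw [Nat.card_fun, card_quot _ (pow_ne_zero 2 hπ), Nat.card_eq_fintype_card (α := Fin m),
    Fintype.card_fin, natDegree_pow, ← pow_mul]
  congr 1
  ring

lemma compl_card {m : ℕ} (f : MvPolynomial (Fin m) Fq[X]) (π : Fq[X]) (hπ : π ≠ 0) :
    cc f π + Nat.card {x : Fin m → Fq[X] ⧸ Ideal.span {π ^ 2} | ¬
    MvPolynomial.eval x (MvPolynomial.map (Ideal.Quotient.mk (Ideal.span {π ^ 2})) f) = 0} =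
    Fintype.card Fq ^ (2 * m * π.natDegree) := by
  classical
  have := finite_quot (π ^ 2) (pow_ne_zero 2 hπ)
  rw [← card_quot_tuples m π hπ, cc]
  rw [← Nat.card_sum]
  exact Nat.card_congr (Equiv.sumCompl _)

lemma compl_card_fac {m : ℕ} (f : MvPolynomial (Fin m) Fq[X]) (π : Fq[X]) (hπ : π ≠ 0) :
    (Nat.card {x : Fin m → Fq[X] ⧸ Ideal.span {π ^ 2} | ¬
    MvPolynomial.eval x (MvPolynomial.map (Ideal.Quotient.mk (Ideal.span {π ^ 2})) f) = 0} : ℝ) =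
    fac f π * (Fintype.card Fq : ℝ) ^ (2 * m * π.natDegree) := by
  have h1 := compl_card f π hπ
  have hq : (0 : ℝ) < Fintype.card Fq := by exact_mod_cast Fintype.card_pos
  have h2 : (cc f π : ℝ) + (Nat.card {x : Fin m → Fq[X] ⧸ Ideal.span {π ^ 2} | ¬
    MvPolynomial.eval x (MvPolynomial.map (Ideal.Quotient.mk (Ideal.span {π ^ 2})) f) = 0} : ℝ) =
    (Fintype.card Fq : ℝ) ^ (2 * m * π.natDegree) := by exact_mod_cast h1
  rw [fac, sub_mul, div_mul_cancel₀ _ (by positivity)]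
  linarith

lemma fac_nonneg {m : ℕ} (f : MvPolynomial (Fin m) Fq[X]) (π : Fq[X]) (hπ : π ≠ 0) :
    0 ≤ fac f π := by
  have hq : (0 : ℝ) < Fintype.card Fq := by exact_mod_cast Fintype.card_pos
  have h1 := compl_card_fac f π hπ
  have h2 : 0 ≤ fac f π * (Fintype.card Fq : ℝ) ^ (2 * m * π.natDegree) := by
    rw [← h1]; positivity
  exact nonneg_of_mul_nonneg_left h2 (by positivity)

lemma fac_le_one {m : ℕ} (f : MvPolynomial (Fin m) Fq[X]) (π : Fq[X]) : fac f π ≤ 1 := by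
  rw [fac]
  have : 0 ≤ (cc f π : ℝ) / (Fintype.card Fq : ℝ) ^ (2 * m * π.natDegree) := by positivity
  linarith

/-- Simultaneous reduction. -/
noncomputable def redAll (T : Finset Fq[X]) (n m : ℕ) :
    (Fin m → degreeLT Fq n) →+ ((π : T) → (Fin m → Fq[X] ⧸ Ideal.span {(π : Fq[X]) ^ 2})) where
  toFun y π i := Ideal.Quotient.mk _ (y i : Fq[X])
  map_zero' := by funext π i; simp
  map_add' := by intros; funext π i; simp

lemma redAll_surj (T : Finset Fq[X]) (hT : ∀ π ∈ T, π.Monic ∧ Irreducible π) (n m : ℕ)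
    (hn : ∑ π ∈ T, 2 * π.natDegree ≤ n) : Function.Surjective (redAll T n m) := by
  intro z
  have hcop : Pairwise (Function.onFun IsCoprime
      (fun π : T => Ideal.span {(π : Fq[X]) ^ 2})) := by
    intro a b hab
    rw [Function.onFun, Ideal.isCoprime_span_singleton_iff]
    exact (coprime_of_ne (hT a a.2).1 (hT a a.2).2 (hT b b.2).1 (hT b b.2).2
      (fun h => hab (Subtype.ext h))).pow
  choose r hr using fun i => Ideal.pi_quotient_surjective hcop (fun π => z π i)
  have hD : (∏ π ∈ T, π ^ 2) ≠ 0 :=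
    Finset.prod_ne_zero_iff.mpr fun π hπ => pow_ne_zero 2 (hT π hπ).2.ne_zero
  have hdeg : (∏ π ∈ T, π ^ 2).natDegree ≤ n := by
    rw [natDegree_prod _ _ (fun π hπ => pow_ne_zero 2 (hT π hπ).2.ne_zero)]
    simpa [natDegree_pow] using hn
  choose x hx hx2 using fun i => exists_rep _ hD n hdeg (r i)
  refine ⟨fun i => ⟨x i, mem_degreeLT.mpr (hx i)⟩, ?_⟩
  funext π i
  rw [← hr i π]
  symm
  refine (Ideal.Quotient.mk_eq_mk_iff_sub_mem _ _).mpr (Ideal.mem_span_singleton.mpr ?_)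
  exact (Finset.dvd_prod_of_mem (fun π => π ^ 2) π.2).trans (hx2 i)

open Classical in
lemma crt_card {m : ℕ} (f : MvPolynomial (Fin m) Fq[X]) (T : Finset Fq[X])
    (hT : ∀ π ∈ T, π.Monic ∧ Irreducible π) (n : ℕ) (hn : ∑ π ∈ T, 2 * π.natDegree ≤ n) :
    (((Fintype.piFinset fun _ : Fin m => box Fq n).filter
      (fun x => ∀ π ∈ T, ¬ π ^ 2 ∣ MvPolynomial.eval x f)).card : ℝ) =
      (∏ π ∈ T, fac f π) * (Fintype.card Fq : ℝ) ^ (n * m) := by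
  have hq : (0 : ℝ) < Fintype.card Fq := by exact_mod_cast Fintype.card_pos
  let S : (π : T) → Set (Fin m → Fq[X] ⧸ Ideal.span {(π : Fq[X]) ^ 2}) := fun π =>
    {x | ¬ MvPolynomial.eval x
      (MvPolynomial.map (Ideal.Quotient.mk (Ideal.span {(π : Fq[X]) ^ 2})) f) = 0}
  have h1 := card_preimage (redAll T n m) (redAll_surj T hT n m hn) (Set.univ.pi S)
  rw [Nat.card_congr (Equiv.Set.univPi S), Nat.card_pi, Nat.card_pi, natCard_tuples] at h1
  have h2 : ((Fintype.piFinset fun _ : Fin m => box Fq n).filter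
      (fun x => ∀ π ∈ T, ¬ π ^ 2 ∣ MvPolynomial.eval x f)).card =
      Nat.card {y // redAll T n m y ∈ Set.univ.pi S} := by
    have h0 := card_filter_box n m (fun x : Fin m → Fq[X] =>
      ∀ π ∈ T, ¬ π ^ 2 ∣ MvPolynomial.eval x f)
    trans Nat.card {y : Fin m → degreeLT Fq n //
      ∀ π ∈ T, ¬ π ^ 2 ∣ MvPolynomial.eval (fun i => (y i : Fq[X])) f}
    · convert! h0
    refine Nat.card_congr (Equiv.subtypeEquivRight fun y => ?_)
    simp only [mk_eval, Set.mem_univ_pi, Subtype.forall]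
    rfl
  rw [← h2] at h1
  have h3 := congrArg (Nat.cast (R := ℝ)) h1
  push_cast at h3
  have h4 : ∀ π : T, (Nat.card (S π) : ℝ) =
      fac f π * (Fintype.card Fq : ℝ) ^ (2 * m * (π : Fq[X]).natDegree) := fun π =>
    compl_card_fac f π (hT π π.2).2.ne_zero
  have h5 : ∀ π : T, (Nat.card (Fin m → Fq[X] ⧸ Ideal.span {(π : Fq[X]) ^ 2}) : ℝ) =
      (Fintype.card Fq : ℝ) ^ (2 * m * (π : Fq[X]).natDegree) := fun π => by
    have h0 := card_quot_tuples m (π : Fq[X]) (hT π π.2).2.ne_zero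
    exact_mod_cast h0
  rw [Finset.prod_congr rfl (fun π _ => h4 π), Finset.prod_congr rfl (fun π _ => h5 π),
    Finset.prod_mul_distrib] at h3
  have h6 : (0 : ℝ) < ∏ π : T, (Fintype.card Fq : ℝ) ^ (2 * m * (π : Fq[X]).natDegree) :=
    Finset.prod_pos fun _ _ => by positivity
  rw [← Finset.prod_coe_sort T (fun π => fac f π)]
  refine mul_right_cancel₀ h6.ne' (h3.trans ?_)
  ring

end CRT

section Final
variable {Fq : Type} [Field Fq] [Fintype Fq]

lemma hasProd_iInf {I : Type} (g : I → ℝ) (h0 : ∀ i, 0 ≤ g i) (h1 : ∀ i, g i ≤ 1) :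
    HasProd g (⨅ T : Finset I, ∏ i ∈ T, g i) := by
  classical
  rw [HasProd, SummationFilter.unconditional_filter]
  refine tendsto_atTop_ciInf ?_ ⟨0, ?_⟩
  · intro S T hST
    show ∏ i ∈ T, g i ≤ ∏ i ∈ S, g i
    rw [← Finset.prod_sdiff hST]
    exact mul_le_of_le_one_left (Finset.prod_nonneg fun i _ => h0 i)
      (Finset.prod_le_one (fun i _ => h0 i) (fun i _ => h1 i))
  · rintro _ ⟨T, rfl⟩
    exact Finset.prod_nonneg fun i _ => h0 i

lemma bdd_prods {I : Type} (g : I → ℝ) (h0 : ∀ i, 0 ≤ g i) :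
    BddBelow (Set.range fun T : Finset I => ∏ i ∈ T, g i) := by
  refine ⟨0, ?_⟩
  rintro _ ⟨T, rfl⟩
  exact Finset.prod_nonneg fun i _ => h0 i

open Classical in
lemma density (m : ℕ) (hm : 1 ≤ m) (f : MvPolynomial (Fin m) Fq[X])
    (hsqf : Squarefree (MvPolynomial.map (algebraMap Fq[X] (RatFunc Fq)) f))
    (P : Finset Fq[X]) :
    Tendsto (fun n : ℕ => (((Fintype.piFinset fun _ : Fin m => box Fq n).filter
      (fun x => ∀ π : Fq[X], π.Monic → Irreducible π → π ∉ P →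
        ¬ π ^ 2 ∣ MvPolynomial.eval x f)).card : ℝ) / (Fintype.card Fq : ℝ) ^ (n * m)) atTop
      (nhds (⨅ T : Finset {π : Fq[X] // π.Monic ∧ Irreducible π ∧ π ∉ P},
        ∏ i ∈ T, fac f i.1)) := by
  have hq : (0 : ℝ) < Fintype.card Fq := by exact_mod_cast Fintype.card_pos
  set a := ⨅ T : Finset {π : Fq[X] // π.Monic ∧ Irreducible π ∧ π ∉ P}, ∏ i ∈ T, fac f i.1 with ha
  have hcrt : ∀ T : Finset {π : Fq[X] // π.Monic ∧ Irreducible π ∧ π ∉ P}, ∃ n0 : ℕ, ∀ n ≥ n0,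
      (((Fintype.piFinset fun _ : Fin m => box Fq n).filter
      (fun x => ∀ π ∈ T, ¬ π.1 ^ 2 ∣ MvPolynomial.eval x f)).card : ℝ) =
      (∏ i ∈ T, fac f i.1) * (Fintype.card Fq : ℝ) ^ (n * m) := by
    intro T
    refine ⟨∑ π ∈ T.map (Function.Embedding.subtype _), 2 * π.natDegree, fun n hn => ?_⟩
    have h1 := crt_card f (T.map (Function.Embedding.subtype _)) (by
      intro π hπ
      rw [Finset.mem_map] at hπ
      obtain ⟨i, _, rfl⟩ := hπ
      exact ⟨i.2.1, i.2.2.1⟩) n hn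
    rw [Finset.prod_map] at h1
    refine Eq.trans ?_ h1
    congr 2
    refine Finset.filter_congr fun x _ => ?_
    simp only [Finset.forall_mem_map, Function.Embedding.subtype_apply]
  obtain ⟨p, hp⟩ := CharP.exists Fq
  have hpp : p.Prime := CharP.char_is_prime Fq p
  obtain ⟨k, rfl⟩ : ∃ k, p = k + 2 := ⟨p - 2, by have := hpp.two_le; omega⟩
  have : Fact (k + 2).Prime := ⟨hpp⟩
  rw [tendsto_order]
  constructor
  · intro b hb
    obtain ⟨M, n0, hM⟩ := tail_bound k m hm f hsqf ((a - b) / 2) (by linarith)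
    let T : Finset {π : Fq[X] // π.Monic ∧ Irreducible π ∧ π ∉ P} :=
      (primes Fq 0 M).subtype _
    obtain ⟨n1, hn1⟩ := hcrt T
    rw [eventually_atTop]
    refine ⟨max n0 n1, fun n hn => ?_⟩
    have h1 := hM n ((le_max_left _ _).trans hn)
    have h2 := hn1 n ((le_max_right _ _).trans hn)
    have h3 : a ≤ ∏ i ∈ T, fac f i.1 :=
      ciInf_le (bdd_prods (fun i : {π : Fq[X] // π.Monic ∧ Irreducible π ∧ π ∉ P} => fac f i.1)
        (fun i => fac_nonneg f i.1 i.2.2.1.ne_zero)) T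
    have h4 : ((Fintype.piFinset fun _ : Fin m => box Fq n).filter
      (fun x => ∀ π ∈ T, ¬ π.1 ^ 2 ∣ MvPolynomial.eval x f)).card ≤
      ((Fintype.piFinset fun _ : Fin m => box Fq n).filter
        (fun x => ∀ π : Fq[X], π.Monic → Irreducible π → π ∉ P →
        ¬ π ^ 2 ∣ MvPolynomial.eval x f)).card +
      ((Fintype.piFinset fun _ : Fin m => box Fq n).filter (fun x => ∃ π : Fq[X], π.Monic ∧
      Irreducible π ∧ M ≤ π.natDegree ∧ π ^ 2 ∣ MvPolynomial.eval x f)).card := by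
      refine (Finset.card_le_card ?_).trans (Finset.card_union_le _ _)
      intro x hx
      rw [Finset.mem_filter] at hx
      rw [Finset.mem_union, Finset.mem_filter, Finset.mem_filter]
      by_contra! hcon
      obtain ⟨π, p1, p2, p3, p4⟩ := hcon.1 hx.1
      rcases lt_or_ge π.natDegree M with h5 | h5
      · refine hx.2 ⟨π, p1, p2, p3⟩ ?_ p4
        rw [Finset.mem_subtype, mem_primes]
        exact ⟨p1, p2, Nat.zero_le _, h5⟩
      · exact hcon.2 hx.1 π p1 p2 h5 p4
    have h5 := (Nat.cast_le (α := ℝ)).mpr h4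
    rw [Nat.cast_add, h2] at h5
    have hqq : (0 : ℝ) < (Fintype.card Fq : ℝ) ^ (n * m) := by positivity
    rw [lt_div_iff₀ hqq]
    have h6 : a * (Fintype.card Fq : ℝ) ^ (n * m) ≤
        (∏ i ∈ T, fac f i.1) * (Fintype.card Fq : ℝ) ^ (n * m) := by gcongr
    nlinarith
  · intro b hb
    obtain ⟨T, hT⟩ := exists_lt_of_ciInf_lt hb
    obtain ⟨n1, hn1⟩ := hcrt T
    rw [eventually_atTop]
    refine ⟨n1, fun n hn => ?_⟩
    have hqq : (0 : ℝ) < (Fintype.card Fq : ℝ) ^ (n * m) := by positivity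
    refine lt_of_le_of_lt ?_ hT
    rw [div_le_iff₀ hqq, ← hn1 n hn]
    refine Nat.cast_le.mpr (Finset.card_le_card ?_)
    intro x hx
    rw [Finset.mem_filter] at hx ⊢
    exact ⟨hx.1, fun π _ => hx.2 π.1 π.2.1 π.2.2.1 π.2.2.2⟩

end Final
end SqSieve

/-- Proposition 3.3 (Poonen's squarefree sieve over `𝔽_q[t]`): for `f` squarefree over
`𝔽_q(t)` in `m` variables and a finite set `P` of monic irreducibles, the density of
`m`-tuples `x` of polynomials with `f(x)` squarefree away from `P` exists and equals
`∏_{π ∉ P} (1 - c_π/q^{2m·deg π})`. -/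
theorem stmt_12 (q : ℕ) (Fq : Type) [Field Fq] [Fintype Fq] (hcard : Fintype.card Fq = q)
    (m : ℕ) (hm : 1 ≤ m)
    (f : MvPolynomial (Fin m) (Polynomial Fq))
    (hsqf : Squarefree (MvPolynomial.map (algebraMap (Polynomial Fq) (RatFunc Fq)) f))
    (P : Finset (Polynomial Fq)) (hP : ∀ π ∈ P, π.Monic ∧ Irreducible π)
    (c : Polynomial Fq → ℕ)
    (hc : ∀ π : Polynomial Fq,
      c π = Nat.card {x : Fin m → Polynomial Fq ⧸ Ideal.span {π ^ 2} //
        MvPolynomial.eval x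
          (MvPolynomial.map (Ideal.Quotient.mk (Ideal.span {π ^ 2})) f) = 0}) :
    Multipliable (fun π : {π : Polynomial Fq // π.Monic ∧ Irreducible π ∧ π ∉ P} =>
      (1 - (c (π : Polynomial Fq) : ℝ) / (q : ℝ) ^ (2 * m * (π : Polynomial Fq).natDegree))) ∧
    Tendsto
      (fun n : ℕ =>
        (Nat.card {x : Fin m → Polynomial Fq //
          (∀ i, (x i).degree < (n : ℕ)) ∧
          ∀ π : Polynomial Fq, π.Monic → Irreducible π → π ∉ P →
            ¬ (π ^ 2 ∣ MvPolynomial.eval x f)} : ℝ) / (q : ℝ) ^ (n * m))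
      atTop
      (nhds (∏' π : {π : Polynomial Fq // π.Monic ∧ Irreducible π ∧ π ∉ P},
        (1 - (c (π : Polynomial Fq) : ℝ) /
          (q : ℝ) ^ (2 * m * (π : Polynomial Fq).natDegree)))) := by
  classical
  subst hcard
  have hcc : ∀ π, c π = SqSieve.cc f π := hc
  have hfun : (fun π : {π : Polynomial Fq // π.Monic ∧ Irreducible π ∧ π ∉ P} =>
      (1 - (c (π : Polynomial Fq) : ℝ) /
        (Fintype.card Fq : ℝ) ^ (2 * m * (π : Polynomial Fq).natDegree))) =
      fun π => SqSieve.fac f π.1 := by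
    funext π
    rw [hcc, SqSieve.fac]
  have hprod := SqSieve.hasProd_iInf
    (fun π : {π : Polynomial Fq // π.Monic ∧ Irreducible π ∧ π ∉ P} => SqSieve.fac f π.1)
    (fun i => SqSieve.fac_nonneg f i.1 i.2.2.1.ne_zero) (fun i => SqSieve.fac_le_one f i.1)
  rw [hfun]
  refine ⟨hprod.multipliable, ?_⟩
  rw [hprod.tprod_eq]
  refine (SqSieve.density m hm f hsqf P).congr fun n => ?_
  congr 2
  symm
  refine Nat.subtype_card _ fun x => ?_
  rw [Finset.mem_filter, Fintype.mem_piFinset]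
  simp only [SqSieve.mem_box]
end
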